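/- Let k ≥ 2 and let A be a subset of the prime numbers whose natural density in the primes exists and equals θ ∈ (0,1]. Then the limit as N → ∞ of the ratio (∑_{n ≥ 1 : every prime factor of n is ≤ N and lies in A} 1/n) / (∑_{k-free n with 1 ≤ n ≤ N : every prime factor of n lies in A} 1/( n_{(k−1)-free} · φ(n_{(k−1)-power}) )) equals e^{γθ} · Γ(θ+1). -/

import Mathlib

open Filter
open scoped Classical

/-- `n` is `k`-free: no `k`-th power of a prime divides `n`. -/
def KFree (k n : ℕ) : Prop := ∀ p : ℕ, p.Prime → ¬ p ^ k ∣ n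

/-- The `m`-free part of `n`: each prime `p` appearing with exponent `e` in `n` contributes
`p ^ (e % m)`.  In particular the `1`-free part of any `n` is `1`. -/
def freePart (m n : ℕ) : ℕ := n.factorization.prod fun p e => p ^ (e % m)

/-- The `m`-power part of `n`: each prime `p` appearing with exponent `e` in `n` contributes
`p ^ (m * (e / m))`, so the result is a perfect `m`-th power, and
`n = freePart m n * powerPart m n`.  In particular the `1`-power part of `n` is `n` itself. -/
def powerPart (m n : ℕ) : ℕ := n.factorization.prod fun p e => p ^ (m * (e / m))

/-- The sum of `1/n` over positive integers `n` all of whose prime factors lie in the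
set described by the predicate `P`. -/
noncomputable def harmSum (P : ℕ → Prop) : ℝ :=
  ∑' n : {n : ℕ // 0 < n ∧ ∀ p : ℕ, p.Prime → p ∣ n → P p}, (1 : ℝ) / ((n : ℕ) : ℝ)

/-!
Unique factorisation gives the weights `w` of the denominator a Dirichlet series of the form
`∑ w(n) n ^ (-s) = exp (∑_{p ∈ A} p ^ (-1 - s) + E(s))`, where `E` is a sum over primes converging
uniformly down to `s = 0`. At `s = 0` the local factors become `(1 - 1 / p)⁻¹`, so the numerator is
`exp (∑_{p ≤ N, p ∈ A} 1 / p + E_N(0))`, where `E_N` are the partial sums of the same series.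

Put `S(t) = ∑_{p ∈ A, log p ≤ t} 1 / p`. Since `log n / n` is eventually decreasing, the natural
density of `A` is also its density for the weights `log p / p`, and Mertens' first theorem with
partial summation yields `S(u t) - S(t) → θ log u`. Writing `∑_{p ∈ A} p ^ (-1 - 1 / t)` as the
Laplace transform `∫₀^∞ exp (-u) S(u t) du`, one finds that it exceeds `S(t)` by
`θ ∫₀^∞ exp (-u) log u du + o(1) = -γ θ + o(1)`. Hence the Dirichlet series is regularly varying of
index `θ` in `t = 1 / s`, and Karamata's Tauberian theorem recovers the partial sums of `w` from it
at the cost of a factor `1 / Γ(θ + 1)`.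
-/

open Asymptotics MeasureTheory Real Topology

theorem log_factorial_eq_sum_primes (n : ℕ) :
    log n.factorial = ∑ p ∈ Finset.Ioc 0 n with p.Prime, n.factorial.factorization p * log p := by
  rw [log_nat_eq_sum_factorization, Finsupp.sum, Nat.support_factorization]
  congr 1
  ext p
  simp only [Nat.mem_primeFactors, Finset.mem_filter, Finset.mem_Ioc]
  refine ⟨fun ⟨hp, hdvd, _⟩ => ⟨⟨hp.pos, hp.dvd_factorial.1 hdvd⟩, hp⟩, fun ⟨⟨_, hle⟩, hp⟩ => ?_⟩
  exact ⟨hp, hp.dvd_factorial.2 hle, n.factorial_ne_zero⟩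

theorem factorization_factorial_mul_log_le {p : ℕ} (hp : p.Prime) (n : ℕ) :
    n.factorial.factorization p * log p ≤ n * (log p / p + log p / (p * (p - 1))) := by
  have h2 : (2 : ℝ) ≤ p := mod_cast hp.two_le
  have hle : (n.factorial.factorization p : ℝ) ≤ n / (p - 1) :=
    calc (n.factorial.factorization p : ℝ)
        ≤ (n / (p - 1) : ℕ) := mod_cast Nat.factorization_factorial_le_div_pred hp n
      _ ≤ n / ((p - 1 : ℕ) : ℝ) := Nat.cast_div_le
      _ = n / (p - 1) := by rw [Nat.cast_sub hp.one_le, Nat.cast_one]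
  have hp1 : (p : ℝ) - 1 ≠ 0 := by linarith
  calc n.factorial.factorization p * log p ≤ n / (p - 1) * log p := by
        gcongr
    _ = n * (log p / p + log p / (p * (p - 1))) := by field_simp; ring

theorem mul_log_div_sub_log_le_factorization_factorial_mul_log {p : ℕ} (hp : p.Prime) (n : ℕ) :
    n * (log p / p) - log p ≤ n.factorial.factorization p * log p := by
  have hle : n / p ≤ n.factorial.factorization p :=
    calc n / p ≤ (p * (n / p)).factorial.factorization p := by
          rw [Nat.factorization_factorial_mul hp]
          exact Nat.le_add_left _ _
      _ ≤ n.factorial.factorization p :=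
          (Nat.factorization_le_iff_dvd (Nat.factorial_ne_zero _) (Nat.factorial_ne_zero _)).2
            (Nat.factorial_dvd_factorial (Nat.mul_div_le n p)) p
  have hfloor : (n : ℝ) / p < (n / p : ℕ) + 1 := by
    rw [← Nat.floor_div_eq_div (K := ℝ)]
    exact Nat.lt_floor_add_one _
  calc n * (log p / p) - log p = (n / p - 1) * log p := by ring
    _ ≤ n.factorial.factorization p * log p := by
        gcongr
        have : ((n / p : ℕ) : ℝ) ≤ n.factorial.factorization p := mod_cast hle
        linarith

theorem log_div_mul_sub_one_nonneg (n : ℕ) : 0 ≤ log n / (n * (n - 1) : ℝ) := by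
  rcases n.eq_zero_or_pos with rfl | hn
  · simp
  · have h1 : (1 : ℝ) ≤ n := mod_cast hn
    exact div_nonneg (log_nonneg h1) (mul_nonneg (by linarith) (by linarith))

theorem summable_log_div_mul_sub_one : Summable fun n : ℕ => log n / (n * (n - 1) : ℝ) := by
  have hsum : Summable fun n : ℕ => 4 * ((n : ℝ) ^ (3 / 2 : ℝ))⁻¹ :=
    (summable_nat_rpow_inv.2 (by norm_num)).mul_left 4
  refine .of_nonneg_of_le log_div_mul_sub_one_nonneg (fun n => ?_) hsum
  rcases Nat.lt_or_ge n 2 with hn | hn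
  · interval_cases n <;> simp
  have h2 : (2 : ℝ) ≤ n := mod_cast hn
  have hlog := log_le_rpow_div (x := n) (ε := 1 / 2) (by linarith) (by norm_num)
  have hmul : (n : ℝ) ^ (3 / 2 : ℝ) * (n : ℝ) ^ (1 / 2 : ℝ) = (n : ℝ) ^ 2 := by
    rw [← rpow_add (by linarith)]
    norm_num
  rw [← div_eq_mul_inv, div_le_div_iff₀ (by nlinarith) (by positivity)]
  calc log n * (n : ℝ) ^ (3 / 2 : ℝ)
      ≤ ((n : ℝ) ^ (1 / 2 : ℝ) / (1 / 2)) * (n : ℝ) ^ (3 / 2 : ℝ) := by gcongr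
    _ = 2 * (n : ℝ) ^ 2 := by rw [← hmul]; ring
    _ ≤ 4 * (n * (n - 1)) := by nlinarith

theorem sum_primes_log_div_le {n : ℕ} (hn : n ≠ 0) :
    ∑ p ∈ Finset.Ioc 0 n with p.Prime, log p / p ≤ log n + log 4 := by
  have hn' : (0 : ℝ) < n := mod_cast hn.bot_lt
  have hfact : log n.factorial ≤ n * log n := by
    rw [← log_pow]
    exact log_le_log (mod_cast n.factorial_pos) (mod_cast n.factorial_le_pow)
  have htheta : ∑ p ∈ Finset.Ioc 0 n with p.Prime, log p ≤ log 4 * n := by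
    simpa only [Chebyshev.theta, Nat.floor_natCast] using Chebyshev.theta_le_log4_mul_x hn'.le
  refine le_of_mul_le_mul_left ?_ hn'
  have hlower : n * ∑ p ∈ Finset.Ioc 0 n with p.Prime, log p / p
      - ∑ p ∈ Finset.Ioc 0 n with p.Prime, log p ≤ log n.factorial := by
    rw [log_factorial_eq_sum_primes, Finset.mul_sum, ← Finset.sum_sub_distrib]
    exact Finset.sum_le_sum fun p hp =>
      mul_log_div_sub_log_le_factorization_factorial_mul_log (Finset.mem_filter.1 hp).2 n
  linarith

theorem log_sub_le_sum_primes_log_div {n : ℕ} (hn : n ≠ 0) :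
    log n - (1 + ∑' m : ℕ, log m / (m * (m - 1) : ℝ)) ≤
      ∑ p ∈ Finset.Ioc 0 n with p.Prime, log p / p := by
  have hn' : (0 : ℝ) < n := mod_cast hn.bot_lt
  have hfact : n * log n - n ≤ log n.factorial := by
    have := Stirling.le_log_factorial_stirling hn
    have := log_natCast_nonneg n
    have : 0 ≤ log (2 * π) := log_nonneg (by nlinarith [pi_gt_three])
    linarith
  have htail : ∑ p ∈ Finset.Ioc 0 n with p.Prime, log p / (p * (p - 1) : ℝ) ≤
      ∑' m : ℕ, log m / (m * (m - 1) : ℝ) :=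
    summable_log_div_mul_sub_one.sum_le_tsum _ fun m _ => log_div_mul_sub_one_nonneg m
  have hupper : log n.factorial ≤ n * (∑ p ∈ Finset.Ioc 0 n with p.Prime, log p / p
      + ∑ p ∈ Finset.Ioc 0 n with p.Prime, log p / (p * (p - 1) : ℝ)) := by
    rw [log_factorial_eq_sum_primes, ← Finset.sum_add_distrib, Finset.mul_sum]
    exact Finset.sum_le_sum fun p hp =>
      factorization_factorial_mul_log_le (Finset.mem_filter.1 hp).2 n
  refine le_of_mul_le_mul_left ?_ hn'
  nlinarith

theorem isBigO_sum_primes_log_div_sub_log :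
    (fun n : ℕ => ∑ p ∈ Finset.Ioc 0 n with p.Prime, log p / p - log n) =O[atTop]
      fun _ => (1 : ℝ) := by
  refine .of_bound (log 4 + (1 + ∑' m : ℕ, log m / (m * (m - 1) : ℝ))) ?_
  filter_upwards [eventually_ne_atTop 0] with n hn
  have := sum_primes_log_div_le hn
  have := log_sub_le_sum_primes_log_div hn
  have : 0 ≤ log 4 := log_nonneg (by norm_num)
  have : 0 ≤ ∑' m : ℕ, log m / (m * (m - 1) : ℝ) := tsum_nonneg log_div_mul_sub_one_nonneg
  rw [norm_one, mul_one, norm_eq_abs, abs_le]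
  constructor <;> linarith

theorem tendsto_sum_primes_log_div_div_log :
    Tendsto (fun n : ℕ => (∑ p ∈ Finset.Ioc 0 n with p.Prime, log p / p) / log n) atTop (𝓝 1) := by
  have hlog : Tendsto (fun n : ℕ => log n) atTop atTop :=
    tendsto_log_atTop.comp tendsto_natCast_atTop_atTop
  have hequiv : (fun n : ℕ => ∑ p ∈ Finset.Ioc 0 n with p.Prime, log p / p) ~[atTop]
      fun n => log n :=
    isBigO_sum_primes_log_div_sub_log.trans_isLittleO <|
      isLittleO_const_left.2 (.inr (tendsto_abs_atTop_atTop.comp hlog))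
  exact (isEquivalent_iff_tendsto_one (hlog.eventually_ne_atTop 0)).1 hequiv

theorem neg_mul_le_sum_mul_of_antitoneOn {u g : ℕ → ℝ} {m n : ℕ} {C : ℝ}
    (hg : AntitoneOn g (Set.Ioi m)) (hg0 : ∀ i, m < i → 0 ≤ g i)
    (hu : ∀ n, m ≤ n → -C ≤ ∑ i ∈ Finset.Ioc m n, u i) (hn : m ≤ n) :
    -(C * g (m + 1)) ≤ ∑ i ∈ Finset.Ioc m n, u i * g i := by
  suffices habel : (∑ i ∈ Finset.Ioc m n, u i) * g (n + 1) - C * (g (m + 1) - g (n + 1)) ≤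
      ∑ i ∈ Finset.Ioc m n, u i * g i by
    nlinarith [mul_le_mul_of_nonneg_right (hu n hn) (hg0 (n + 1) (by lia))]
  induction n, hn using Nat.le_induction with
  | base => simp
  | succ n hn ih =>
    have hstep : g (n + 1 + 1) ≤ g (n + 1) :=
      hg (Set.mem_Ioi.2 (by lia)) (Set.mem_Ioi.2 (by lia)) (by lia)
    have hpartial := hu (n + 1) (by lia)
    rw [Finset.sum_Ioc_succ_top hn] at hpartial ⊢
    rw [Finset.sum_Ioc_succ_top hn]
    nlinarith [mul_le_mul_of_nonneg_right hpartial (sub_nonneg.2 hstep)]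

theorem eventually_neg_mul_le_sum_mul_of_antitoneOn {a b g : ℕ → ℝ} {m₀ : ℕ} {ε : ℝ}
    (hg : AntitoneOn g (Set.Ioi m₀)) (hg0 : ∀ i, m₀ < i → 0 ≤ g i) (hε : 0 < ε)
    (hab : ∀ᶠ n in atTop, -(ε * ∑ i ∈ Finset.Ioc 0 n, b i) ≤ ∑ i ∈ Finset.Ioc 0 n, a i)
    (hdiv : Tendsto (fun n => ∑ i ∈ Finset.Ioc 0 n, b i * g i) atTop atTop) :
    ∀ᶠ n in atTop,
      -(2 * ε * ∑ i ∈ Finset.Ioc 0 n, b i * g i) ≤ ∑ i ∈ Finset.Ioc 0 n, a i * g i := by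
  obtain ⟨m, hm⟩ := eventually_atTop.1 (hab.and (eventually_ge_atTop m₀))
  set u : ℕ → ℝ := fun i => ε * b i + a i
  have hsplit (f : ℕ → ℝ) {n : ℕ} (hn : m ≤ n) :
      ∑ i ∈ Finset.Ioc 0 m, f i + ∑ i ∈ Finset.Ioc m n, f i = ∑ i ∈ Finset.Ioc 0 n, f i :=
    Finset.sum_Ioc_consecutive f m.zero_le hn
  have hpartial (n : ℕ) (hn : m ≤ n) :
      -(∑ i ∈ Finset.Ioc 0 m, u i) ≤ ∑ i ∈ Finset.Ioc m n, u i := by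
    have hsum : ∑ i ∈ Finset.Ioc 0 n, u i =
        ε * ∑ i ∈ Finset.Ioc 0 n, b i + ∑ i ∈ Finset.Ioc 0 n, a i := by
      rw [Finset.sum_add_distrib, Finset.mul_sum]
    linarith [hsplit u hn, (hm n hn).1]
  filter_upwards [eventually_ge_atTop m, hdiv.eventually_ge_atTop
    (((∑ i ∈ Finset.Ioc 0 m, u i) * g (m + 1) - ∑ i ∈ Finset.Ioc 0 m, u i * g i) / ε)]
    with n hn hlarge
  have habel := neg_mul_le_sum_mul_of_antitoneOn
    (hg.mono (Set.Ioi_subset_Ioi (hm m le_rfl).2)) (fun i hi => hg0 i ((hm m le_rfl).2.trans_lt hi))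
    hpartial hn
  have hexpand : ∑ i ∈ Finset.Ioc 0 n, u i * g i =
      ε * ∑ i ∈ Finset.Ioc 0 n, b i * g i + ∑ i ∈ Finset.Ioc 0 n, a i * g i := by
    rw [Finset.mul_sum, ← Finset.sum_add_distrib]
    exact Finset.sum_congr rfl fun i _ => by ring
  rw [div_le_iff₀' hε] at hlarge
  linarith [hsplit (fun i => u i * g i) hn]

theorem isLittleO_sum_mul_of_antitoneOn {a b g : ℕ → ℝ} {m : ℕ}
    (hg : AntitoneOn g (Set.Ioi m)) (hg0 : ∀ i, m < i → 0 ≤ g i) (hb : ∀ i, 0 ≤ b i)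
    (hab : (fun n => ∑ i ∈ Finset.Ioc 0 n, a i) =o[atTop] fun n => ∑ i ∈ Finset.Ioc 0 n, b i)
    (hdiv : Tendsto (fun n => ∑ i ∈ Finset.Ioc 0 n, b i * g i) atTop atTop) :
    (fun n => ∑ i ∈ Finset.Ioc 0 n, a i * g i) =o[atTop]
      fun n => ∑ i ∈ Finset.Ioc 0 n, b i * g i := by
  refine isLittleO_iff.2 fun ε hε => ?_
  have hsmall : ∀ᶠ n in atTop, |∑ i ∈ Finset.Ioc 0 n, a i| ≤ ε / 2 * ∑ i ∈ Finset.Ioc 0 n, b i := by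
    simpa only [norm_eq_abs, abs_of_nonneg (Finset.sum_nonneg fun i _ => hb i)] using
      isLittleO_iff.1 hab (half_pos hε)
  have hlower := eventually_neg_mul_le_sum_mul_of_antitoneOn hg hg0 (half_pos hε)
    (hsmall.mono fun n hn => neg_le_of_abs_le hn) hdiv
  have hupper := eventually_neg_mul_le_sum_mul_of_antitoneOn (a := -a) hg hg0 (half_pos hε)
    (hsmall.mono fun n hn => by simpa using le_of_abs_le hn) hdiv
  filter_upwards [hlower, hupper, hdiv.eventually_ge_atTop 0] with n hlower hupper hpos
  simp only [Pi.neg_apply, neg_mul, Finset.sum_neg_distrib] at hupper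
  rw [norm_eq_abs, norm_eq_abs, abs_of_nonneg hpos, abs_le]
  constructor <;> linarith

theorem tendsto_sum_mul_div_sum_mul_of_antitoneOn {a b g : ℕ → ℝ} {θ : ℝ} {m : ℕ}
    (hg : AntitoneOn g (Set.Ioi m)) (hg0 : ∀ i, m < i → 0 ≤ g i) (hb : ∀ i, 0 ≤ b i)
    (hb0 : ∀ᶠ n in atTop, ∑ i ∈ Finset.Ioc 0 n, b i ≠ 0)
    (hab : Tendsto (fun n => (∑ i ∈ Finset.Ioc 0 n, a i) / ∑ i ∈ Finset.Ioc 0 n, b i) atTop (𝓝 θ))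
    (hdiv : Tendsto (fun n => ∑ i ∈ Finset.Ioc 0 n, b i * g i) atTop atTop) :
    Tendsto (fun n => (∑ i ∈ Finset.Ioc 0 n, a i * g i) / ∑ i ∈ Finset.Ioc 0 n, b i * g i)
      atTop (𝓝 θ) := by
  have hdiff : (fun n => ∑ i ∈ Finset.Ioc 0 n, (a i - θ * b i)) =o[atTop]
      fun n => ∑ i ∈ Finset.Ioc 0 n, b i := by
    refine (isLittleO_iff_tendsto' (hb0.mono fun n hn h => absurd h hn)).2 ?_
    refine (tendsto_sub_nhds_zero_iff.2 hab).congr' (hb0.mono fun n hn => ?_)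
    simp only [Finset.sum_sub_distrib, ← Finset.mul_sum]
    field_simp
  have hweighted := (isLittleO_sum_mul_of_antitoneOn hg hg0 hb hdiff hdiv).tendsto_div_nhds_zero
  refine tendsto_sub_nhds_zero_iff.1 (hweighted.congr' ?_)
  filter_upwards [hdiv.eventually_ne_atTop 0] with n hn
  simp only [sub_mul, Finset.sum_sub_distrib, mul_assoc, ← Finset.mul_sum]
  field_simp

theorem ncard_inter_Icc_one (A : Set ℕ) (n : ℕ) :
    ((A ∩ Set.Icc 1 n).ncard : ℝ) = ∑ i ∈ Finset.Ioc 0 n, A.indicator 1 i := by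
  have : A ∩ Set.Icc 1 n = ((Finset.Ioc 0 n).filter (· ∈ A) : Finset ℕ) := by
    ext i
    simp only [Set.mem_inter_iff, Set.mem_Icc, Finset.coe_filter, Finset.mem_Ioc,
      Set.mem_ofPred_eq, Nat.succ_le_iff]
    tauto
  rw [this, Set.ncard_coe_finset, Finset.card_filter]
  push_cast
  rfl

theorem tendsto_sum_indicator_log_div_div_log {A : Set ℕ} {θ : ℝ}
    (hdens : Tendsto (fun N : ℕ => ((A ∩ Set.Icc 1 N).ncard : ℝ) /
      (({p : ℕ | p.Prime} ∩ Set.Icc 1 N).ncard : ℝ)) atTop (𝓝 θ)) :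
    Tendsto (fun n : ℕ => (∑ p ∈ Finset.Ioc 0 n, A.indicator (fun p => log p / p) p) / log n)
      atTop (𝓝 θ) := by
  have hindicator (B : Set ℕ) (p : ℕ) :
      B.indicator 1 p * (log p / p) = B.indicator (fun p => log p / p) p := by
    by_cases hp : p ∈ B <;> simp [hp]
  have hprimes (n : ℕ) : ∑ p ∈ Finset.Ioc 0 n, {p : ℕ | p.Prime}.indicator 1 p * (log p / p) =
      ∑ p ∈ Finset.Ioc 0 n with p.Prime, log p / p := by
    rw [Finset.sum_filter]
    exact Finset.sum_congr rfl fun p _ => by by_cases hp : p.Prime <;> simp [hp]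
  have hlog : Tendsto (fun n : ℕ => log n) atTop atTop :=
    tendsto_log_atTop.comp tendsto_natCast_atTop_atTop
  have hdiv : Tendsto (fun n => ∑ p ∈ Finset.Ioc 0 n, {p : ℕ | p.Prime}.indicator 1 p * (log p / p))
      atTop atTop := by
    simp only [hprimes]
    refine (tendsto_sum_primes_log_div_div_log.pos_mul_atTop one_pos hlog).congr' ?_
    filter_upwards [hlog.eventually_ne_atTop 0] with n hn
    exact div_mul_cancel₀ _ hn
  have hweights : AntitoneOn (fun n : ℕ => log n / n) (Set.Ioi 2) := fun i hi j hj hij => by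
    have hexp (k : ℕ) (hk : 2 < k) : exp 1 ≤ k :=
      exp_one_lt_three.le.trans (by exact_mod_cast hk)
    exact log_div_self_antitoneOn (hexp i hi) (hexp j hj) (by exact_mod_cast hij)
  have hcard : ∀ᶠ n in atTop,
      ∑ p ∈ Finset.Ioc 0 n, {p : ℕ | p.Prime}.indicator (1 : ℕ → ℝ) p ≠ 0 := by
    filter_upwards [eventually_ge_atTop 2] with n hn
    rw [← ncard_inter_Icc_one, Nat.cast_ne_zero]
    exact Set.ncard_ne_zero_of_mem (a := 2) ⟨Nat.prime_two, one_le_two, hn⟩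
  simp only [ncard_inter_Icc_one] at hdens
  have hratio := tendsto_sum_mul_div_sum_mul_of_antitoneOn (a := A.indicator 1)
    (b := {p : ℕ | p.Prime}.indicator 1) hweights
    (fun i _ => div_nonneg (log_natCast_nonneg i) i.cast_nonneg)
    (fun i => Set.indicator_nonneg (fun _ _ => zero_le_one) i) hcard hdens hdiv
  simp only [hprimes] at hratio hdiv
  simp only [hindicator] at hratio
  refine (mul_one θ ▸ hratio.mul tendsto_sum_primes_log_div_div_log).congr' ?_
  filter_upwards [hdiv.eventually_ne_atTop 0] with n hn
  exact div_mul_div_cancel₀ hn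

/-- The summatory function of `c` on a logarithmic scale: the sum of `c n` over `0 < n ≤ e ^ t`. -/
noncomputable def expSum (c : ℕ → ℝ) (t : ℝ) : ℝ := ∑ n ∈ Finset.Ioc 0 ⌊exp t⌋₊, c n

section ExpSum

variable {c : ℕ → ℝ}

theorem mem_Ioc_floor_exp_iff {n : ℕ} {t : ℝ} :
    n ∈ Finset.Ioc 0 ⌊exp t⌋₊ ↔ 0 < n ∧ log n ≤ t := by
  rw [Finset.mem_Ioc, Nat.le_floor_iff (exp_pos t).le]
  exact and_congr_right fun hn => (log_le_iff_le_exp (Nat.cast_pos.2 hn)).symm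

theorem expSum_log {N : ℕ} (hN : N ≠ 0) : expSum c (log N) = ∑ n ∈ Finset.Ioc 0 N, c n := by
  rw [expSum, exp_log (Nat.cast_pos.2 hN.bot_lt), Nat.floor_natCast]

theorem expSum_nonneg (hc : ∀ n, 0 ≤ c n) (t : ℝ) : 0 ≤ expSum c t :=
  Finset.sum_nonneg fun n _ => hc n

theorem monotone_expSum (hc : ∀ n, 0 ≤ c n) : Monotone (expSum c) := fun _ _ hst =>
  Finset.sum_le_sum_of_subset_of_nonneg
    (Finset.Ioc_subset_Ioc_right (Nat.floor_mono (exp_le_exp.2 hst))) fun n _ _ => hc n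

theorem expSum_eq_sum_indicator {s t : ℝ} (hst : s ≤ t) :
    expSum c s = ∑ n ∈ Finset.Ioc 0 ⌊exp t⌋₊, (Set.Ici (log n)).indicator (fun _ => c n) s := by
  simp only [Set.indicator_apply, Set.mem_Ici]
  rw [← Finset.sum_filter, expSum]
  congr 1
  ext n
  simp only [Finset.mem_filter, mem_Ioc_floor_exp_iff]
  exact ⟨fun h => ⟨⟨h.1, h.2.trans hst⟩, h.2⟩, fun h => ⟨h.1.1, h.2⟩⟩

theorem tendsto_expSum_div {θ : ℝ}
    (hc : Tendsto (fun n : ℕ => (∑ i ∈ Finset.Ioc 0 n, c i) / log n) atTop (𝓝 θ)) :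
    Tendsto (fun t => expSum c t / t) atTop (𝓝 θ) := by
  have hfloor : Tendsto (fun t => log ⌊exp t⌋₊ / t) atTop (𝓝 1) := by
    have hratio := (tendsto_nat_floor_div_atTop (R := ℝ)).comp tendsto_exp_atTop
    have hlog := (hratio.log one_ne_zero).div_atTop tendsto_id
    rw [← tendsto_sub_nhds_zero_iff]
    refine hlog.congr' ?_
    filter_upwards [eventually_gt_atTop 0] with t ht
    have hpos : 0 < ⌊exp t⌋₊ := Nat.floor_pos.2 (one_le_exp ht.le)
    simp only [Function.comp_apply, id]
    rw [log_div (by positivity) (exp_pos t).ne', log_exp]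
    field_simp
  have hcomp := hc.comp (tendsto_nat_floor_atTop.comp tendsto_exp_atTop)
  refine (mul_one θ ▸ hcomp.mul hfloor).congr' ?_
  filter_upwards [eventually_ge_atTop (log 2)] with t ht
  have htwo : 2 ≤ ⌊exp t⌋₊ := Nat.le_floor (by simpa [log_le_iff_le_exp] using ht)
  have hlog : log ⌊exp t⌋₊ ≠ 0 := (log_pos (by exact_mod_cast htwo)).ne'
  exact div_mul_div_cancel₀ hlog

end ExpSum

section SlowVariation

variable {c : ℕ → ℝ} {θ : ℝ}

theorem integral_indicator_Ici_inv_sq {s t x : ℝ} (hs : 0 < s) (hst : s ≤ t) (hx : x ≤ t) :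
    ∫ v in s..t, (Set.Ici x).indicator (fun v => (v ^ 2)⁻¹) v = (max s x)⁻¹ - t⁻¹ := by
  have hmax : 0 < max s x := lt_max_of_lt_left hs
  have hinter : Set.Icc s t ∩ Set.Ici x = Set.Icc (max s x) t := by
    ext v
    simp only [Set.mem_inter_iff, Set.mem_Icc, Set.mem_Ici, sup_le_iff]
    tauto
  have hpow (v : ℝ) : (v ^ 2)⁻¹ = v ^ (-2 : ℤ) := by rw [zpow_neg]; rfl
  rw [intervalIntegral.integral_of_le hst, ← integral_Icc_eq_integral_Ioc,
    setIntegral_indicator measurableSet_Ici, hinter, integral_Icc_eq_integral_Ioc,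
    ← intervalIntegral.integral_of_le (max_le hst hx)]
  simp only [hpow]
  rw [integral_zpow (.inr ⟨by norm_num, Set.notMem_uIcc_of_lt hmax (hs.trans_le hst)⟩)]
  norm_num
  ring

theorem intervalIntegrable_indicator_Ici_inv_sq {s t : ℝ} (hs : 0 < s) (hst : s ≤ t) (x : ℝ) :
    IntervalIntegrable ((Set.Ici x).indicator fun v => (v ^ 2)⁻¹) volume s t := by
  have hcont : ContinuousOn (fun v : ℝ => (v ^ 2)⁻¹) (Set.uIcc s t) := by
    rw [Set.uIcc_of_le hst]
    exact fun v hv => ((continuousAt_id.pow 2).inv₀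
      (pow_ne_zero 2 (hs.trans_le hv.1).ne')).continuousWithinAt
  have hint := hcont.intervalIntegrable (μ := volume)
  exact ⟨hint.1.indicator measurableSet_Ici, hint.2.indicator measurableSet_Ici⟩

theorem expSum_div_sq_eq_sum {v t : ℝ} (hvt : v ≤ t) :
    expSum c v / v ^ 2 = ∑ n ∈ Finset.Ioc 0 ⌊exp t⌋₊,
      c n * (Set.Ici (log n)).indicator (fun v => (v ^ 2)⁻¹) v := by
  rw [expSum_eq_sum_indicator hvt, Finset.sum_div]
  refine Finset.sum_congr rfl fun n _ => ?_
  by_cases hn : v ∈ Set.Ici (log n) <;> simp [hn, div_eq_mul_inv]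

theorem intervalIntegrable_expSum_div_sq {s t : ℝ} (hs : 0 < s) (hst : s ≤ t) :
    IntervalIntegrable (fun v => expSum c v / v ^ 2) volume s t := by
  have hsum := IntervalIntegrable.sum (Finset.Ioc 0 ⌊exp t⌋₊) fun (n : ℕ) _ =>
    (intervalIntegrable_indicator_Ici_inv_sq hs hst (log n)).const_mul (c n)
  refine hsum.congr fun v hv => ?_
  rw [Set.uIoc_of_le hst] at hv
  rw [Finset.sum_apply]
  exact (expSum_div_sq_eq_sum hv.2).symm

theorem integral_expSum_div_sq {s t : ℝ} (hs : 0 < s) (hst : s ≤ t) :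
    ∫ v in s..t, expSum c v / v ^ 2 =
      ∑ n ∈ Finset.Ioc 0 ⌊exp t⌋₊, c n * ((max s (log n))⁻¹ - t⁻¹) :=
  calc ∫ v in s..t, expSum c v / v ^ 2
      = ∫ v in s..t, ∑ n ∈ Finset.Ioc 0 ⌊exp t⌋₊,
          c n * (Set.Ici (log n)).indicator (fun v => (v ^ 2)⁻¹) v :=
        intervalIntegral.integral_congr fun v hv =>
          expSum_div_sq_eq_sum (Set.uIcc_of_le hst ▸ hv : v ∈ Set.Icc s t).2
    _ = ∑ n ∈ Finset.Ioc 0 ⌊exp t⌋₊, c n * ((max s (log n))⁻¹ - t⁻¹) := by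
        rw [intervalIntegral.integral_finsetSum fun (n : ℕ) _ =>
          (intervalIntegrable_indicator_Ici_inv_sq hs hst (log n)).const_mul (c n)]
        refine Finset.sum_congr rfl fun n hn => ?_
        rw [intervalIntegral.integral_const_mul,
          integral_indicator_Ici_inv_sq hs hst (mem_Ioc_floor_exp_iff.1 hn).2]

theorem expSum_sub_expSum_eq {s t : ℝ} (hs : 0 < s) (hst : s ≤ t) :
    expSum c t - expSum c s =
      expSum (fun n => c n * log n) t / t - expSum (fun n => c n * log n) s / s +
        ∫ v in s..t, expSum (fun n => c n * log n) v / v ^ 2 := by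
  rw [integral_expSum_div_sq hs hst, expSum_eq_sum_indicator hst, expSum_eq_sum_indicator hst,
    expSum, expSum, Finset.sum_div, Finset.sum_div, ← Finset.sum_sub_distrib,
    ← Finset.sum_sub_distrib, ← Finset.sum_add_distrib]
  refine Finset.sum_congr rfl fun n _ => ?_
  rcases le_or_gt (log n) s with hn | hn
  · rw [Set.indicator_of_mem (Set.mem_Ici.2 hn), Set.indicator_of_mem (Set.mem_Ici.2 hn),
      max_eq_left hn]
    ring
  · have hlog : log n ≠ 0 := (hs.trans hn).ne'
    rw [Set.indicator_of_notMem (Set.notMem_Ici.2 hn),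
      Set.indicator_of_notMem (Set.notMem_Ici.2 hn), max_eq_right hn.le]
    field_simp
    ring

theorem abs_expSum_sub_expSum_sub_le {s t ε : ℝ} (hs : 0 < s) (hst : s ≤ t)
    (hε : ∀ v, s ≤ v → |expSum (fun n => c n * log n) v / v - θ| ≤ ε) :
    |expSum c t - expSum c s - θ * log (t / s)| ≤ 2 * ε + ε * log (t / s) := by
  set F := expSum fun n => c n * log n
  have ht : 0 < t := hs.trans_le hst
  have hpos {v : ℝ} (hv : v ∈ Set.uIcc s t) : 0 < v := by
    rw [Set.uIcc_of_le hst] at hv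
    exact hs.trans_le hv.1
  have hinv : IntervalIntegrable (fun v : ℝ => v⁻¹) volume s t :=
    intervalIntegral.intervalIntegrable_inv (fun v hv => (hpos hv).ne') continuousOn_id
  have hsub : (∫ v in s..t, F v / v ^ 2) - θ * log (t / s) = ∫ v in s..t, (F v / v - θ) * v⁻¹ := by
    rw [← integral_inv_of_pos hs ht, ← intervalIntegral.integral_const_mul,
      ← intervalIntegral.integral_sub (intervalIntegrable_expSum_div_sq hs hst)
        (hinv.const_mul θ)]
    refine intervalIntegral.integral_congr fun v hv => ?_
    have := hpos hv
    simp only [F]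
    field_simp
  have hint : |∫ v in s..t, (F v / v - θ) * v⁻¹| ≤ ε * log (t / s) := by
    rw [← integral_inv_of_pos hs ht, ← intervalIntegral.integral_const_mul,
      ← norm_eq_abs]
    refine intervalIntegral.norm_integral_le_of_norm_le hst (.of_forall fun v hv => ?_)
      (hinv.const_mul ε)
    rw [norm_mul, norm_inv, norm_eq_abs, norm_eq_abs, abs_of_pos (hs.trans hv.1)]
    exact mul_le_mul_of_nonneg_right (hε v hv.1.le) (inv_nonneg.2 (hs.trans hv.1).le)
  have hend {v : ℝ} (hv : s ≤ v) := abs_le.1 (hε v hv)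
  rw [← hsub, abs_le] at hint
  rw [expSum_sub_expSum_eq hs hst, abs_le]
  constructor <;> linarith [hend le_rfl, hend hst]

theorem abs_expSum_sub_expSum_sub_le_of_pos {s t ε : ℝ} (hs : 0 < s) (ht : 0 < t)
    (hε : ∀ v, min s t ≤ v → |expSum (fun n => c n * log n) v / v - θ| ≤ ε) :
    |expSum c t - expSum c s - θ * log (t / s)| ≤ ε * (2 + |log (t / s)|) := by
  wlog hst : s ≤ t generalizing s t
  · have hswap := this ht hs (min_comm s t ▸ hε) (le_of_not_ge hst)
    rw [← inv_div, log_inv, abs_neg] at hswap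
    rw [abs_sub_comm] at hswap
    calc _ = |θ * -log (t / s) - (expSum c s - expSum c t)| := by ring_nf
      _ ≤ _ := hswap
  · have hlog : 0 ≤ log (t / s) := log_nonneg ((one_le_div hs).2 hst)
    have := abs_expSum_sub_expSum_sub_le hs hst (min_eq_left hst ▸ hε)
    rw [abs_of_nonneg hlog]
    linarith

theorem tendsto_expSum_mul_sub_expSum
    (hc : Tendsto (fun t => expSum (fun n => c n * log n) t / t) atTop (𝓝 θ)) {u : ℝ} (hu : 0 < u) :
    Tendsto (fun t => expSum c (u * t) - expSum c t) atTop (𝓝 (θ * log u)) := by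
  refine Metric.tendsto_nhds.2 fun ε hε => ?_
  obtain ⟨M, hM⟩ := eventually_atTop.1 (Metric.tendsto_nhds.1 hc (ε / (2 * (2 + |log u|)))
    (by positivity))
  have hmin : Tendsto (fun t => min t (u * t)) atTop atTop :=
    tendsto_atTop.2 fun b => (eventually_ge_atTop b).and
      ((tendsto_id.const_mul_atTop hu).eventually_ge_atTop b) |>.mono fun t ht => le_min ht.1 ht.2
  filter_upwards [eventually_gt_atTop 0, hmin.eventually_ge_atTop M] with t ht htM
  have hbound := abs_expSum_sub_expSum_sub_le_of_pos (c := c) (θ := θ) ht (mul_pos hu ht)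
    fun v hv => (hM v (htM.trans hv)).le
  rw [mul_div_cancel_right₀ u ht.ne'] at hbound
  calc dist (expSum c (u * t) - expSum c t) (θ * log u)
      ≤ ε / (2 * (2 + |log u|)) * (2 + |log u|) := hbound
    _ = ε / 2 := by field_simp
    _ < ε := half_lt_self hε

theorem expSum_mul_log_eq_zero {t : ℝ} (ht : t < log 2) : expSum (fun n => c n * log n) t = 0 := by
  refine Finset.sum_eq_zero fun n hn => ?_
  rw [mem_Ioc_floor_exp_iff] at hn
  have hn2 : (n : ℝ) < 2 := (log_lt_log_iff (Nat.cast_pos.2 hn.1) two_pos).1 (hn.2.trans_lt ht)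
  have hn1 : n = 1 := by
    have : n < 2 := mod_cast hn2
    lia
  simp [hn1]

theorem exists_abs_expSum_mul_log_div_sub_le (hc0 : ∀ n, 0 ≤ c n)
    (hc : Tendsto (fun t => expSum (fun n => c n * log n) t / t) atTop (𝓝 θ)) :
    ∃ B, ∀ t, |expSum (fun n => c n * log n) t / t - θ| ≤ B := by
  set F := expSum fun n => c n * log n
  have hnonneg (n : ℕ) : 0 ≤ c n * log n := mul_nonneg (hc0 n) (log_natCast_nonneg n)
  obtain ⟨M, hM⟩ := eventually_atTop.1 (Metric.tendsto_nhds.1 hc 1 one_pos)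
  have hlog2 : 0 < log 2 := log_pos one_lt_two
  have hFM : 0 ≤ F M / log 2 := div_nonneg (expSum_nonneg hnonneg M) hlog2.le
  refine ⟨F M / log 2 + |θ| + 1, fun t => ?_⟩
  rcases lt_or_ge t (log 2) with ht2 | ht2
  · have : F t = 0 := expSum_mul_log_eq_zero ht2
    rw [this, zero_div, zero_sub, abs_neg]
    linarith
  rcases le_or_gt M t with htM | htM
  · have : |F t / t - θ| < 1 := hM t htM
    linarith [abs_nonneg θ]
  · have hnum : 0 ≤ F t := expSum_nonneg hnonneg t
    have hle : F t / t ≤ F M / log 2 :=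
      div_le_div₀ (expSum_nonneg hnonneg M) (monotone_expSum hnonneg htM.le) hlog2 ht2
    calc |F t / t - θ| ≤ |F t / t| + |θ| := abs_sub _ _
      _ = F t / t + |θ| := by rw [abs_of_nonneg (div_nonneg hnum (hlog2.le.trans ht2))]
      _ ≤ F M / log 2 + |θ| + 1 := by linarith

theorem exists_abs_expSum_mul_sub_expSum_le (hc0 : ∀ n, 0 ≤ c n)
    (hc : Tendsto (fun t => expSum (fun n => c n * log n) t / t) atTop (𝓝 θ)) :
    ∃ B, ∀ u t, 0 < u → 0 < t → |expSum c (u * t) - expSum c t| ≤ B * (2 + |log u|) := by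
  obtain ⟨B, hB⟩ := exists_abs_expSum_mul_log_div_sub_le hc0 hc
  refine ⟨B + |θ|, fun u t hu ht => ?_⟩
  have hbound := abs_expSum_sub_expSum_sub_le_of_pos (c := c) ht (mul_pos hu ht) fun v _ => hB v
  rw [mul_div_cancel_right₀ u ht.ne'] at hbound
  have hlog : |θ * log u| ≤ |θ| * (2 + |log u|) := by
    rw [abs_mul]
    gcongr
    linarith
  linarith [abs_sub_abs_le_abs_sub (expSum c (u * t) - expSum c t) (θ * log u)]

end SlowVariation

section LaplaceTransform

theorem integral_log_mul_exp_neg :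
    ∫ u in Set.Ioi (0 : ℝ), log u * exp (-u) = -eulerMascheroniConstant := by
  have hGamma : Complex.Gamma =ᶠ[𝓝 1] Complex.GammaIntegral := by
    filter_upwards [(isOpen_lt continuous_const Complex.continuous_re).mem_nhds
      (by simp : (1 : ℂ) ∈ {s : ℂ | 0 < s.re})] with s hs using Complex.Gamma_eq_integral hs
  have hderiv := ((Complex.hasDerivAt_GammaIntegral (s := 1) (by norm_num)).congr_of_eventuallyEq
    hGamma).unique Complex.hasDerivAt_Gamma_one
  rw [← Complex.ofReal_inj, ← integral_complex_ofReal]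
  push_cast
  rw [← hderiv]
  simp

theorem integrableOn_log_mul_exp_neg :
    IntegrableOn (fun u : ℝ => log u * exp (-u)) (Set.Ioi 0) := by
  refine not_imp_comm.1 integral_undef ?_
  rw [integral_log_mul_exp_neg]
  exact neg_ne_zero.2 (one_half_pos.trans one_half_lt_eulerMascheroniConstant).ne'

variable {c : ℕ → ℝ} {θ t : ℝ}

theorem setIntegral_indicator_Ici_exp_neg {a : ℝ} (ha : 0 ≤ a) :
    ∫ u in Set.Ioi (0 : ℝ), (Set.Ici a).indicator (fun u => exp (-u)) u = exp (-a) := by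
  rw [← integral_Ici_eq_integral_Ioi, setIntegral_indicator measurableSet_Ici, Set.Ici_inter_Ici,
    max_eq_right ha, integral_Ici_eq_integral_Ioi, integral_exp_neg_Ioi]

theorem exp_neg_mul_expSum_eq_tsum (hc : c 0 = 0) (ht : 0 < t) (u : ℝ) :
    exp (-u) * expSum c (u * t) =
      ∑' n : ℕ, c n * (Set.Ici (log n / t)).indicator (fun u => exp (-u)) u := by
  rw [tsum_eq_sum (s := Finset.Ioc 0 ⌊exp (u * t)⌋₊), expSum, Finset.mul_sum]
  · refine Finset.sum_congr rfl fun n hn => ?_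
    rw [Set.indicator_of_mem (Set.mem_Ici.2 ((div_le_iff₀ ht).2 (mem_Ioc_floor_exp_iff.1 hn).2)),
      mul_comm]
  · intro n hn
    rcases n.eq_zero_or_pos with rfl | hpos
    · rw [hc, zero_mul]
    · rw [Set.indicator_of_notMem, mul_zero]
      exact fun h => hn (mem_Ioc_floor_exp_iff.2 ⟨hpos, (div_le_iff₀ ht).1 h⟩)

theorem hasSum_mul_rpow_neg_inv (hc0 : ∀ n, 0 ≤ c n) (hc : c 0 = 0) (ht : 0 < t)
    (hsum : Summable fun n : ℕ => c n * (n : ℝ) ^ (-t⁻¹)) :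
    HasSum (fun n : ℕ => c n * (n : ℝ) ^ (-t⁻¹))
      (∫ u in Set.Ioi (0 : ℝ), exp (-u) * expSum c (u * t)) := by
  set F : ℕ → ℝ → ℝ := fun n u => c n * (Set.Ici (log n / t)).indicator (fun u => exp (-u)) u
  have hF0 (n : ℕ) (u : ℝ) : 0 ≤ F n u :=
    mul_nonneg (hc0 n) (Set.indicator_nonneg (fun u _ => (exp_pos _).le) u)
  have hFint (n : ℕ) : IntegrableOn (F n) (Set.Ioi 0) :=
    ((integrableOn_exp_neg_Ioi 0).indicator measurableSet_Ici).const_mul (c n)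
  have hFintegral (n : ℕ) : ∫ u in Set.Ioi 0, F n u = c n * (n : ℝ) ^ (-t⁻¹) := by
    rw [integral_const_mul, setIntegral_indicator_Ici_exp_neg
      (div_nonneg (log_natCast_nonneg n) ht.le)]
    rcases n.eq_zero_or_pos with rfl | hpos
    · rw [hc, zero_mul, zero_mul]
    · rw [rpow_def_of_pos (Nat.cast_pos.2 hpos), mul_neg, div_eq_mul_inv]
  have hnorm : Summable fun n => ∫ u in Set.Ioi 0, ‖F n u‖ := by
    simpa only [norm_of_nonneg (hF0 _ _), hFintegral] using hsum
  simpa only [exp_neg_mul_expSum_eq_tsum hc ht, hFintegral] using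
    hasSum_integral_of_summable_integral_norm hFint hnorm

theorem exists_integrableOn_bound_exp_neg_mul_expSum_sub (hc0 : ∀ n, 0 ≤ c n)
    (hc : Tendsto (fun t => expSum (fun n => c n * log n) t / t) atTop (𝓝 θ)) :
    ∃ g : ℝ → ℝ, IntegrableOn g (Set.Ioi 0) ∧ ∀ t : ℝ, 0 < t → ∀ u ∈ Set.Ioi (0 : ℝ),
      ‖exp (-u) * (expSum c (u * t) - expSum c t)‖ ≤ g u := by
  obtain ⟨B, hB⟩ := exists_abs_expSum_mul_sub_expSum_le hc0 hc
  refine ⟨fun u => B * (2 * exp (-u) + |log u * exp (-u)|),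
    (((integrableOn_exp_neg_Ioi 0).const_mul 2).add integrableOn_log_mul_exp_neg.abs).const_mul B,
    fun t ht u hu => ?_⟩
  simp only [norm_mul, norm_eq_abs, abs_mul, abs_exp]
  linarith [mul_le_mul_of_nonneg_left (hB u t hu ht) (exp_pos (-u)).le]

theorem tendsto_tsum_mul_rpow_sub_expSum (hc0 : ∀ n, 0 ≤ c n) (hc00 : c 0 = 0)
    (hsum : ∀ t : ℝ, 0 < t → Summable fun n : ℕ => c n * (n : ℝ) ^ (-t⁻¹))
    (hc : Tendsto (fun t => expSum (fun n => c n * log n) t / t) atTop (𝓝 θ)) :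
    Tendsto (fun t => ∑' n : ℕ, c n * (n : ℝ) ^ (-t⁻¹) - expSum c t) atTop
      (𝓝 (-(eulerMascheroniConstant * θ))) := by
  obtain ⟨g, hg, hle⟩ := exists_integrableOn_bound_exp_neg_mul_expSum_sub hc0 hc
  have hmeas (t : ℝ) : AEStronglyMeasurable (fun u => exp (-u) * (expSum c (u * t) - expSum c t))
      (volume.restrict (Set.Ioi 0)) := by
    have := (monotone_expSum hc0).measurable
    exact Measurable.aestronglyMeasurable (by fun_prop)
  have hae (t : ℝ) (ht : 0 < t) :=
    ae_restrict_of_forall_mem (μ := volume) measurableSet_Ioi (hle t ht)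
  have hlim : Tendsto (fun t => ∫ u in Set.Ioi (0 : ℝ), exp (-u) * (expSum c (u * t) - expSum c t))
      atTop (𝓝 (∫ u in Set.Ioi (0 : ℝ), exp (-u) * (θ * log u))) := by
    refine tendsto_integral_filter_of_dominated_convergence _ (.of_forall hmeas)
      ((eventually_gt_atTop 0).mono hae) hg ?_
    filter_upwards [ae_restrict_mem measurableSet_Ioi] with u hu
    exact (tendsto_expSum_mul_sub_expSum hc hu).const_mul _
  have hγ : ∫ u in Set.Ioi (0 : ℝ), exp (-u) * (θ * log u) = -(eulerMascheroniConstant * θ) := by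
    rw [← neg_mul, mul_comm _ θ, ← integral_log_mul_exp_neg, ← integral_const_mul]
    exact integral_congr_ae (.of_forall fun u => by ring)
  refine (hγ ▸ hlim).congr' ?_
  filter_upwards [eventually_gt_atTop 0] with t ht
  have hconst := integral_add (hg.mono' (hmeas t) (hae t ht))
    ((integrableOn_exp_neg_Ioi 0).mul_const (expSum c t))
  rw [integral_mul_const, integral_exp_neg_Ioi_zero, one_mul] at hconst
  rw [(hasSum_mul_rpow_neg_inv hc0 hc00 ht (hsum t ht)).tsum_eq, eq_sub_iff_add_eq, ← hconst]
  exact integral_congr_ae (.of_forall fun u => by ring)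

end LaplaceTransform

section Karamata

theorem exists_continuous_indicator_Iic_le_le {a b : ℝ} (hab : a < b) :
    ∃ h : ℝ → ℝ, Continuous h ∧ ∀ u,
      (Set.Iic a).indicator 1 u ≤ h (exp (-u)) * exp (-u) ∧
        h (exp (-u)) * exp (-u) ≤ (Set.Iic b).indicator 1 u := by
  have hsub : 0 < exp (-a) - exp (-b) := sub_pos.2 (exp_lt_exp.2 (neg_lt_neg hab))
  have hmax (y : ℝ) : 0 < max y (exp (-b)) := lt_max_of_lt_right (exp_pos _)
  set r : ℝ → ℝ := fun y => max 0 (min 1 ((y - exp (-b)) / (exp (-a) - exp (-b))))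
  refine ⟨fun y => r y * (max y (exp (-b)))⁻¹,
    (by fun_prop : Continuous r).mul (Continuous.inv₀ (by fun_prop) fun y => (hmax y).ne'),
    fun u => ⟨?_, ?_⟩⟩
  · refine Set.indicator_apply_le' (fun (hu : u ≤ a) => ?_) fun _ => ?_
    · have hexp : exp (-a) ≤ exp (-u) := exp_le_exp.2 (neg_le_neg hu)
      have hone : r (exp (-u)) = 1 :=
        (congrArg (max 0) (min_eq_left ((one_le_div hsub).2 (by linarith)))).trans
          (max_eq_right zero_le_one)
      beta_reduce
      rw [Pi.one_apply, hone, max_eq_left (by linarith), one_mul, inv_mul_cancel₀ (exp_pos _).ne']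
    · have := hmax (exp (-u))
      positivity
  · refine Set.le_indicator_apply (fun _ => ?_) fun hu => ?_
    · have := hmax (exp (-u))
      rw [mul_assoc]
      exact mul_le_one₀ (max_le zero_le_one (min_le_left _ _)) (by positivity)
        (inv_mul_le_one_of_le₀ (le_max_left _ _) (hmax _).le)
    · have hexp : exp (-u) < exp (-b) := exp_lt_exp.2 (neg_lt_neg (not_le.1 hu))
      have hzero : r (exp (-u)) = 0 :=
        max_eq_left ((min_le_right _ _).trans (div_neg_of_neg_of_pos (by linarith) hsub).le)
      beta_reduce
      rw [hzero, zero_mul, zero_mul]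

section ExpTransform

variable {μ : Measure ℝ} {h : ℝ → ℝ}

theorem integrable_comp_exp_neg_mul_exp_neg (h0 : ∀ᵐ u ∂μ, 0 ≤ u)
    (hμ : Integrable (fun u => exp (-u)) μ) (hh : Continuous h) :
    Integrable (fun u => h (exp (-u)) * exp (-u)) μ := by
  obtain ⟨C, hC⟩ := isCompact_Icc.exists_bound_of_continuousOn (s := Set.Icc (0 : ℝ) 1)
    hh.continuousOn
  refine hμ.bdd_mul (c := C) (Continuous.aestronglyMeasurable (by fun_prop)) ?_
  filter_upwards [h0] with u hu
  exact hC _ ⟨(exp_pos _).le, exp_le_one_iff.2 (neg_nonpos.2 hu)⟩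

theorem abs_integral_comp_exp_neg_mul_exp_neg_le {η : ℝ} (h0 : ∀ᵐ u ∂μ, 0 ≤ u)
    (hμ : Integrable (fun u => exp (-u)) μ) (hη : ∀ y ∈ Set.Icc (0 : ℝ) 1, |h y| ≤ η) :
    |∫ u, h (exp (-u)) * exp (-u) ∂μ| ≤ η * ∫ u, exp (-u) ∂μ := by
  rw [← integral_const_mul, ← norm_eq_abs]
  refine norm_integral_le_of_norm_le (hμ.const_mul η) ?_
  filter_upwards [h0] with u hu
  rw [norm_mul, norm_eq_abs, norm_of_nonneg (exp_pos _).le]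
  gcongr
  exact hη _ ⟨(exp_pos _).le, exp_le_one_iff.2 (neg_nonpos.2 hu)⟩

theorem integral_polynomial_exp_neg_mul_exp_neg (h0 : ∀ᵐ u ∂μ, 0 ≤ u)
    (hμ : Integrable (fun u => exp (-u)) μ) (p : Polynomial ℝ) :
    ∫ u, p.eval (exp (-u)) * exp (-u) ∂μ =
      ∑ m ∈ Finset.range (p.natDegree + 1), p.coeff m * ∫ u, exp (-((m + 1) * u)) ∂μ := by
  have hexp (m : ℕ) (u : ℝ) : exp (-((m + 1) * u)) = exp (-u) ^ m * exp (-u) := by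
    rw [← pow_succ, ← exp_nat_mul]
    push_cast
    ring_nf
  simp only [Polynomial.eval_eq_sum_range, Finset.sum_mul, mul_assoc, hexp]
  rw [integral_finsetSum _ fun m _ => (integrable_comp_exp_neg_mul_exp_neg h0 hμ
    (continuous_pow m)).const_mul _]
  simp only [integral_const_mul]

theorem abs_integral_comp_exp_neg_sub_le {g : ℝ → ℝ} {η : ℝ} (h0 : ∀ᵐ u ∂μ, 0 ≤ u)
    (hμ : Integrable (fun u => exp (-u)) μ) (hg : Continuous g) (hh : Continuous h)
    (hη : ∀ y ∈ Set.Icc (0 : ℝ) 1, |g y - h y| ≤ η) :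
    |∫ u, g (exp (-u)) * exp (-u) ∂μ - ∫ u, h (exp (-u)) * exp (-u) ∂μ| ≤
      η * ∫ u, exp (-u) ∂μ := by
  rw [← integral_sub (integrable_comp_exp_neg_mul_exp_neg h0 hμ hg)
    (integrable_comp_exp_neg_mul_exp_neg h0 hμ hh)]
  simpa only [← sub_mul] using abs_integral_comp_exp_neg_mul_exp_neg_le h0 hμ hη

theorem integrable_indicator_Iic_one (hμ : Integrable (fun u => exp (-u)) μ) (a : ℝ) :
    Integrable ((Set.Iic a).indicator (1 : ℝ → ℝ)) μ := by
  refine (hμ.const_mul (exp a)).mono' (aestronglyMeasurable_const.indicator measurableSet_Iic) ?_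
  refine .of_forall fun u => ?_
  rw [norm_indicator_eq_indicator_norm, ← exp_add]
  refine Set.indicator_apply_le' (fun (hu : u ≤ a) => ?_) fun _ => (exp_pos _).le
  rw [Pi.one_apply, norm_one]
  exact one_le_exp (by linarith)

theorem measureReal_Iic_le_integral (h0 : ∀ᵐ u ∂μ, 0 ≤ u)
    (hμ : Integrable (fun u => exp (-u)) μ) (hh : Continuous h) {a : ℝ}
    (hle : ∀ u, (Set.Iic a).indicator 1 u ≤ h (exp (-u)) * exp (-u)) :
    μ.real (Set.Iic a) ≤ ∫ u, h (exp (-u)) * exp (-u) ∂μ := by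
  rw [← integral_indicator_one measurableSet_Iic]
  exact integral_mono (integrable_indicator_Iic_one hμ a)
    (integrable_comp_exp_neg_mul_exp_neg h0 hμ hh) hle

theorem integral_le_measureReal_Iic (h0 : ∀ᵐ u ∂μ, 0 ≤ u)
    (hμ : Integrable (fun u => exp (-u)) μ) (hh : Continuous h) {a : ℝ}
    (hle : ∀ u, h (exp (-u)) * exp (-u) ≤ (Set.Iic a).indicator 1 u) :
    ∫ u, h (exp (-u)) * exp (-u) ∂μ ≤ μ.real (Set.Iic a) := by
  rw [← integral_indicator_one measurableSet_Iic]
  exact integral_mono (integrable_comp_exp_neg_mul_exp_neg h0 hμ hh)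
    (integrable_indicator_Iic_one hμ a) hle

end ExpTransform

section Continuity

variable {ι : Type*} {l : Filter ι} {μ : ι → Measure ℝ} {ν : Measure ℝ}

theorem tendsto_integral_comp_exp_neg_of_tendsto_laplace {h : ℝ → ℝ}
    (h0 : ∀ᶠ i in l, ∀ᵐ u ∂μ i, 0 ≤ u)
    (hμ : ∀ᶠ i in l, Integrable (fun u => exp (-u)) (μ i))
    (hν0 : ∀ᵐ u ∂ν, 0 ≤ u) (hν : Integrable (fun u => exp (-u)) ν)
    (hlim : ∀ m : ℕ, Tendsto (fun i => ∫ u, exp (-((m + 1) * u)) ∂μ i) l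
      (𝓝 (∫ u, exp (-((m + 1) * u)) ∂ν)))
    (hh : Continuous h) :
    Tendsto (fun i => ∫ u, h (exp (-u)) * exp (-u) ∂μ i) l
      (𝓝 (∫ u, h (exp (-u)) * exp (-u) ∂ν)) := by
  have hM : Tendsto (fun i => ∫ u, exp (-u) ∂μ i) l (𝓝 (∫ u, exp (-u) ∂ν)) := by
    simpa using hlim 0
  set M := ∫ u, exp (-u) ∂ν
  have hM0 : 0 ≤ M := integral_nonneg fun u => (exp_pos _).le
  have hpoly (p : Polynomial ℝ) : Tendsto (fun i => ∫ u, p.eval (exp (-u)) * exp (-u) ∂μ i) l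
      (𝓝 (∫ u, p.eval (exp (-u)) * exp (-u) ∂ν)) := by
    rw [integral_polynomial_exp_neg_mul_exp_neg hν0 hν]
    refine (tendsto_finsetSum _ fun m _ => (hlim m).const_mul _).congr' ?_
    filter_upwards [h0, hμ] with i h0i hμi
    exact (integral_polynomial_exp_neg_mul_exp_neg h0i hμi p).symm
  refine Metric.tendsto_nhds.2 fun ε hε => ?_
  obtain ⟨p, hp⟩ := exists_polynomial_near_of_continuousOn 0 1 h hh.continuousOn
    (ε / (4 * (M + 1))) (by positivity)
  have hη (y : ℝ) (hy : y ∈ Set.Icc (0 : ℝ) 1) : |p.eval y - h y| ≤ ε / (4 * (M + 1)) :=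
    (hp y hy).le
  filter_upwards [h0, hμ, hM.eventually_lt_const (lt_add_one M),
    Metric.tendsto_nhds.1 (hpoly p) (ε / 2) (half_pos hε)] with i h0i hμi hMi hpi
  have hclosei := abs_integral_comp_exp_neg_sub_le h0i hμi p.continuous hh hη
  have hclose := abs_integral_comp_exp_neg_sub_le hν0 hν p.continuous hh hη
  have hbound : ε / (4 * (M + 1)) * (∫ u, exp (-u) ∂μ i) + ε / (4 * (M + 1)) * M ≤ ε / 2 := by
    calc _ ≤ ε / (4 * (M + 1)) * (M + 1) + ε / (4 * (M + 1)) * (M + 1) := by gcongr; linarith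
      _ = ε / 2 := by field_simp; ring
  rw [Real.dist_eq, abs_lt] at hpi ⊢
  rw [abs_le] at hclosei hclose
  constructor <;> linarith

theorem tendsto_measureReal_Iic_of_tendsto_laplace {a : ℝ}
    (h0 : ∀ᶠ i in l, ∀ᵐ u ∂μ i, 0 ≤ u)
    (hμ : ∀ᶠ i in l, Integrable (fun u => exp (-u)) (μ i))
    (hν0 : ∀ᵐ u ∂ν, 0 ≤ u) (hν : Integrable (fun u => exp (-u)) ν)
    (hlim : ∀ m : ℕ, Tendsto (fun i => ∫ u, exp (-((m + 1) * u)) ∂μ i) l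
      (𝓝 (∫ u, exp (-((m + 1) * u)) ∂ν)))
    (ha : ContinuousAt (fun x => ν.real (Set.Iic x)) a) :
    Tendsto (fun i => (μ i).real (Set.Iic a)) l (𝓝 (ν.real (Set.Iic a))) := by
  refine tendsto_order.2 ⟨fun y hy => ?_, fun y hy => ?_⟩
  · obtain ⟨b, hyb, hba⟩ := ((ha.mono_left nhdsWithin_le_nhds).eventually_const_lt hy |>.and
      (self_mem_nhdsWithin (s := Set.Iio a))).exists
    obtain ⟨h, hh, hle⟩ := exists_continuous_indicator_Iic_le_le hba
    have hlow := hyb.trans_le (measureReal_Iic_le_integral hν0 hν hh fun u => (hle u).1)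
    filter_upwards [h0, hμ, (tendsto_integral_comp_exp_neg_of_tendsto_laplace h0 hμ hν0 hν hlim
      hh).eventually_const_lt hlow] with i h0i hμi hi
    exact hi.trans_le (integral_le_measureReal_Iic h0i hμi hh fun u => (hle u).2)
  · obtain ⟨b, hyb, hab⟩ := ((ha.mono_left nhdsWithin_le_nhds).eventually_lt_const hy |>.and
      (self_mem_nhdsWithin (s := Set.Ioi a))).exists
    obtain ⟨h, hh, hle⟩ := exists_continuous_indicator_Iic_le_le hab
    have hup := (integral_le_measureReal_Iic hν0 hν hh fun u => (hle u).2).trans_lt hyb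
    filter_upwards [h0, hμ, (tendsto_integral_comp_exp_neg_of_tendsto_laplace h0 hμ hν0 hν hlim
      hh).eventually_lt_const hup] with i h0i hμi hi
    exact (measureReal_Iic_le_integral h0i hμi hh fun u => (hle u).1).trans_lt hi

end Continuity

theorem integral_rpow_mul_exp_neg_mul_div_Gamma {θ r : ℝ} (hθ : 0 < θ) (hr : 0 < r) :
    ∫ u in Set.Ioi (0 : ℝ), u ^ (θ - 1) / Gamma θ * exp (-(r * u)) = r ^ (-θ) := by
  have hcomm (u : ℝ) : u ^ (θ - 1) / Gamma θ * exp (-(r * u)) =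
      (Gamma θ)⁻¹ * (u ^ (θ - 1) * exp (-(r * u))) := by ring
  simp only [hcomm]
  rw [integral_const_mul, integral_rpow_mul_exp_neg_mul_Ioi hθ hr, rpow_neg hr.le, one_div,
    inv_rpow hr.le]
  field_simp [(Gamma_pos_of_pos hθ).ne']

theorem setIntegral_rpow_div_Gamma {θ x : ℝ} (hθ : 0 < θ) (hx : 0 ≤ x) :
    ∫ u in Set.Ioc 0 x, u ^ (θ - 1) / Gamma θ = x ^ θ / Gamma (θ + 1) := by
  rw [← intervalIntegral.integral_of_le hx, intervalIntegral.integral_div,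
    integral_rpow (Or.inl (by linarith)), sub_add_cancel, zero_rpow hθ.ne', sub_zero,
    Gamma_add_one hθ.ne', div_div]

theorem exists_measure_laplace_eq_rpow_neg {θ : ℝ} (hθ : 0 ≤ θ) :
    ∃ ν : Measure ℝ, (∀ᵐ u ∂ν, 0 ≤ u) ∧ Integrable (fun u => exp (-u)) ν ∧
      (∀ r > 0, ∫ u, exp (-(r * u)) ∂ν = r ^ (-θ)) ∧
        ∀ x > 0, ν.real (Set.Iic x) = x ^ θ / Gamma (θ + 1) := by
  rcases hθ.eq_or_lt with rfl | hθ
  · refine ⟨Measure.dirac 0, ?_, integrable_dirac (by simp), fun r _ => ?_, fun x hx => ?_⟩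
    · rw [ae_dirac_eq]
      exact le_refl (0 : ℝ)
    · simp
    · simp [Measure.real, hx.le]
  set g : ℝ → ℝ := fun u => u ^ (θ - 1) / Gamma θ
  set ν := (volume.restrict (Set.Ioi (0 : ℝ))).withDensity fun u => ENNReal.ofReal (g u)
  have hg : Measurable g := by fun_prop
  have hg0 : ∀ u ∈ Set.Ioi (0 : ℝ), 0 ≤ g u := fun u (hu : 0 < u) =>
    div_nonneg (rpow_nonneg hu.le _) (Gamma_pos_of_pos hθ).le
  have hgae := ae_restrict_of_forall_mem (μ := volume) measurableSet_Ioi hg0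
  have hintegral (f : ℝ → ℝ) : ∫ u, f u ∂ν = ∫ u in Set.Ioi 0, g u * f u := by
    rw [integral_withDensity_eq_integral_toReal_smul hg.ennreal_ofReal (by simp)]
    refine setIntegral_congr_fun measurableSet_Ioi fun u hu => ?_
    simp only [ENNReal.toReal_ofReal (hg0 u hu), smul_eq_mul]
  refine ⟨ν, (withDensity_absolutelyContinuous _ _).ae_le
    (ae_restrict_of_forall_mem measurableSet_Ioi fun u hu => le_of_lt hu),
    ?_, fun r hr => ?_, fun x hx => ?_⟩
  · rw [integrable_withDensity_iff_integrable_smul' hg.ennreal_ofReal (by simp)]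
    refine ((GammaIntegral_convergent hθ).div_const (Gamma θ)).congr ?_
    filter_upwards [hgae] with u hu
    simp only [ENNReal.toReal_ofReal hu, smul_eq_mul, g]
    ring
  · rw [hintegral, integral_rpow_mul_exp_neg_mul_div_Gamma hθ hr]
  · rw [← integral_indicator_one measurableSet_Iic, hintegral,
      ← setIntegral_rpow_div_Gamma hθ hx.le]
    simp only [← Set.indicator_mul_right]
    rw [setIntegral_indicator measurableSet_Iic, Set.Ioi_inter_Iic]
    simp only [Pi.one_apply, mul_one, g]

/-- The image of `∑ f n δ_{log n}` under scaling by `t⁻¹`, normalised by its Laplace transform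
at `1`. -/
noncomputable def rescaledDirichletMeasure (f : ℕ → ℝ) (t : ℝ) : Measure ℝ :=
  Measure.sum fun n : ℕ =>
    ENNReal.ofReal (f n / ∑' n : ℕ, f n * (n : ℝ) ^ (-t⁻¹)) • Measure.dirac (log n / t)

section RescaledDirichletMeasure

variable {f : ℕ → ℝ} {t : ℝ}

theorem ae_nonneg_rescaledDirichletMeasure (ht : 0 ≤ t) :
    ∀ᵐ u ∂rescaledDirichletMeasure f t, 0 ≤ u := by
  refine Measure.ae_sum_iff.2 fun n => Measure.ae_smul_measure ?_ _
  rw [ae_dirac_eq]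
  exact div_nonneg (log_natCast_nonneg n) ht

theorem integral_rescaledDirichletMeasure (hf : ∀ n, 0 ≤ f n) (g : ℝ → ℝ) :
    ∫ u, g u ∂rescaledDirichletMeasure f t =
      (∑' n : ℕ, f n * g (log n / t)) / ∑' n : ℕ, f n * (n : ℝ) ^ (-t⁻¹) := by
  have hD : 0 ≤ ∑' n : ℕ, f n * (n : ℝ) ^ (-t⁻¹) :=
    tsum_nonneg fun n => mul_nonneg (hf n) (by positivity)
  rw [rescaledDirichletMeasure, integral_sum_dirac (fun _ => ENNReal.ofReal_ne_top),
    ← tsum_div_const]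
  refine tsum_congr fun n => ?_
  rw [ENNReal.toReal_ofReal (div_nonneg (hf n) hD), smul_eq_mul, div_mul_eq_mul_div]

theorem mul_exp_neg_mul_log_div_eq (hf0 : f 0 = 0) (r : ℝ) (n : ℕ) :
    f n * exp (-(r * (log n / t))) = f n * (n : ℝ) ^ (-(t / r)⁻¹) := by
  rcases n.eq_zero_or_pos with rfl | hn
  · rw [hf0, zero_mul, zero_mul]
  · rw [rpow_def_of_pos (Nat.cast_pos.2 hn), inv_div]
    ring_nf

theorem integrable_exp_neg_rescaledDirichletMeasure (hf : ∀ n, 0 ≤ f n) (hf0 : f 0 = 0)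
    (hsum : Summable fun n : ℕ => f n * (n : ℝ) ^ (-t⁻¹)) :
    Integrable (fun u => exp (-u)) (rescaledDirichletMeasure f t) := by
  have hD : 0 ≤ ∑' n : ℕ, f n * (n : ℝ) ^ (-t⁻¹) :=
    tsum_nonneg fun n => mul_nonneg (hf n) (by positivity)
  refine integrable_sum_dirac (fun _ => ENNReal.ofReal_ne_top) ?_
  refine (hsum.div_const (∑' n : ℕ, f n * (n : ℝ) ^ (-t⁻¹))).congr fun n => ?_
  have := mul_exp_neg_mul_log_div_eq (t := t) hf0 1 n
  rw [one_mul, div_one] at this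
  rw [ENNReal.toReal_ofReal (div_nonneg (hf n) hD), norm_of_nonneg (exp_pos _).le,
    div_mul_eq_mul_div, this]

theorem measureReal_rescaledDirichletMeasure_Iic_one (hf : ∀ n, 0 ≤ f n) (hf0 : f 0 = 0)
    (ht : 0 < t) :
    (rescaledDirichletMeasure f t).real (Set.Iic 1) =
      expSum f t / ∑' n : ℕ, f n * (n : ℝ) ^ (-t⁻¹) := by
  rw [← integral_indicator_one measurableSet_Iic, integral_rescaledDirichletMeasure hf,
    tsum_eq_sum (s := Finset.Ioc 0 ⌊exp t⌋₊) fun n hn => ?_, expSum]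
  · congr 1
    refine Finset.sum_congr rfl fun n hn => ?_
    rw [Set.indicator_of_mem (Set.mem_Iic.2 ((div_le_one ht).2 (mem_Ioc_floor_exp_iff.1 hn).2)),
      Pi.one_apply, mul_one]
  · rcases n.eq_zero_or_pos with rfl | hpos
    · rw [hf0, zero_mul]
    · rw [mem_Ioc_floor_exp_iff, not_and, not_le] at hn
      rw [Set.indicator_of_notMem (Set.notMem_Iic.2 ((one_lt_div ht).2 (hn hpos))), mul_zero]

end RescaledDirichletMeasure

theorem tendsto_expSum_div_tsum_mul_rpow {f : ℕ → ℝ} {θ : ℝ} (hθ : 0 ≤ θ) (hf : ∀ n, 0 ≤ f n)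
    (hf0 : f 0 = 0) (hsum : ∀ t : ℝ, 0 < t → Summable fun n : ℕ => f n * (n : ℝ) ^ (-t⁻¹))
    (hreg : ∀ r > 0, Tendsto (fun t : ℝ => (∑' n : ℕ, f n * (n : ℝ) ^ (-(t / r)⁻¹)) /
      ∑' n : ℕ, f n * (n : ℝ) ^ (-t⁻¹)) atTop (𝓝 (r ^ (-θ)))) :
    Tendsto (fun t => expSum f t / ∑' n : ℕ, f n * (n : ℝ) ^ (-t⁻¹)) atTop
      (𝓝 (Gamma (θ + 1))⁻¹) := by
  obtain ⟨ν, hν0, hν, hlaplace, hcdf⟩ := exists_measure_laplace_eq_rpow_neg hθ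
  have hcont : ContinuousAt (fun x => ν.real (Set.Iic x)) 1 :=
    ((continuousAt_rpow_const 1 θ (.inl one_ne_zero)).div_const (Gamma (θ + 1))).congr <| by
      filter_upwards [lt_mem_nhds zero_lt_one] with x hx using (hcdf x hx).symm
  have hlim := tendsto_measureReal_Iic_of_tendsto_laplace (l := atTop)
    (μ := rescaledDirichletMeasure f)
    ((eventually_ge_atTop 0).mono fun t ht => ae_nonneg_rescaledDirichletMeasure ht)
    ((eventually_gt_atTop 0).mono fun t ht =>
      integrable_exp_neg_rescaledDirichletMeasure hf hf0 (hsum t ht)) hν0 hν (fun m => ?_) hcont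
  · rw [hcdf 1 one_pos, one_rpow, one_div] at hlim
    refine hlim.congr' ?_
    filter_upwards [eventually_gt_atTop 0] with t ht
    exact measureReal_rescaledDirichletMeasure_Iic_one hf hf0 ht
  · simp only [integral_rescaledDirichletMeasure hf, mul_exp_neg_mul_log_div_eq hf0,
      hlaplace (m + 1) (by positivity)]
    exact hreg (m + 1) (by positivity)

end Karamata

section EulerProductAsymptotics

variable {c : ℕ → ℝ} {θ : ℝ}

theorem tendsto_exp_expSum_add_div_exp {δ : ℝ → ℝ} {L r : ℝ} (hr : 0 < r)
    (hc : Tendsto (fun t => expSum (fun n => c n * log n) t / t) atTop (𝓝 θ))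
    (hδ : Tendsto δ atTop (𝓝 L)) :
    Tendsto (fun t => exp (expSum c (t / r) + δ (t / r)) / exp (expSum c t + δ t)) atTop
      (𝓝 (r ^ (-θ))) := by
  have hdiff := (tendsto_expSum_mul_sub_expSum hc (inv_pos.2 hr)).add
    ((hδ.comp (tendsto_id.atTop_div_const hr)).sub hδ)
  have hlim : exp (θ * log r⁻¹ + (L - L)) = r ^ (-θ) := by
    rw [sub_self, add_zero, log_inv, rpow_def_of_pos hr]
    ring_nf
  refine (hlim ▸ hdiff.rexp).congr fun t => ?_
  rw [← exp_sub]
  simp only [Function.comp_apply, id, div_eq_inv_mul]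
  ring_nf

theorem tendsto_expSum_div_exp_expSum {f : ℕ → ℝ} {E : ℝ → ℝ} {E₀ : ℝ} (hf : ∀ n, 0 ≤ f n)
    (hf0 : f 0 = 0) (hc : ∀ n, 0 ≤ c n) (hc0 : c 0 = 0)
    (hsum : ∀ t : ℝ, 0 < t → Summable fun n : ℕ => c n * (n : ℝ) ^ (-t⁻¹))
    (hdens : Tendsto (fun t => expSum (fun n => c n * log n) t / t) atTop (𝓝 θ))
    (hE : Tendsto E atTop (𝓝 E₀))
    (hexp : ∀ t : ℝ, 0 < t → HasSum (fun n : ℕ => f n * (n : ℝ) ^ (-t⁻¹))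
      (exp (∑' n : ℕ, c n * (n : ℝ) ^ (-t⁻¹) + E t))) :
    Tendsto (fun t => expSum f t / exp (expSum c t)) atTop
      (𝓝 ((Gamma (θ + 1))⁻¹ * exp (E₀ - eulerMascheroniConstant * θ))) := by
  have hθ : 0 ≤ θ := ge_of_tendsto hdens <| (eventually_ge_atTop 0).mono fun t ht =>
    div_nonneg (expSum_nonneg (fun n => mul_nonneg (hc n) (log_natCast_nonneg n)) t) ht
  set δ : ℝ → ℝ := fun t => ∑' n : ℕ, c n * (n : ℝ) ^ (-t⁻¹) - expSum c t + E t
  have hδ : Tendsto δ atTop (𝓝 (E₀ - eulerMascheroniConstant * θ)) := by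
    rw [sub_eq_neg_add]
    exact (tendsto_tsum_mul_rpow_sub_expSum hc hc0 hsum hdens).add hE
  have hseries (t : ℝ) (ht : 0 < t) :
      ∑' n : ℕ, f n * (n : ℝ) ^ (-t⁻¹) = exp (expSum c t + δ t) := by
    rw [(hexp t ht).tsum_eq]
    simp only [δ]
    ring_nf
  have hkaramata := tendsto_expSum_div_tsum_mul_rpow hθ hf hf0
    (fun t ht => (hexp t ht).summable) fun r hr => by
      refine (tendsto_exp_expSum_add_div_exp hr hdens hδ).congr' ?_
      filter_upwards [eventually_gt_atTop 0] with t ht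
      rw [hseries t ht, hseries (t / r) (div_pos ht hr)]
  refine (hkaramata.mul hδ.rexp).congr' ?_
  filter_upwards [eventually_gt_atTop 0] with t ht
  rw [hseries t ht, exp_add, div_mul_eq_mul_div, mul_div_mul_right _ _ (exp_pos _).ne']

end EulerProductAsymptotics

section EulerProduct

variable {h a : ℕ → ℝ}

theorem prod_primesBelow_tsum_eq_exp_sum (ha : ∀ p, ¬ p.Prime → a p = 0)
    (hlocal : ∀ p, p.Prime → HasSum (fun e => h (p ^ e)) (exp (a p))) (N : ℕ) :
    ∏ p ∈ N.primesBelow, ∑' e, h (p ^ e) = exp (∑ p ∈ Finset.range N, a p) := by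
  rw [exp_sum, Nat.primesBelow, Finset.prod_filter]
  refine Finset.prod_congr rfl fun p _ => ?_
  split_ifs with hp
  · exact (hlocal p hp).tsum_eq
  · rw [ha p hp, exp_zero]

theorem sum_range_le_prod_primesBelow_tsum (hh : ∀ n, 0 ≤ h n) (h0 : h 0 = 0) (h1 : h 1 = 1)
    (hmul : ∀ {m n : ℕ}, m.Coprime n → h (m * n) = h m * h n)
    (hsum : ∀ {p : ℕ}, p.Prime → Summable fun e => h (p ^ e)) (N : ℕ) :
    ∑ n ∈ Finset.range N, h n ≤ ∏ p ∈ N.primesBelow, ∑' e, h (p ^ e) := by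
  have hsmooth := (EulerProduct.summable_and_hasSum_smoothNumbers_prod_primesBelow_tsum h1 hmul
    (fun {p} hp => (hsum hp).norm) N).2
  rw [← hsmooth.tsum_eq, tsum_subtype]
  calc ∑ n ∈ Finset.range N, h n = ∑ n ∈ Finset.range N, N.smoothNumbers.indicator h n := by
        refine Finset.sum_congr rfl fun n hn => ?_
        rcases n.eq_zero_or_pos with rfl | hpos
        · exact h0.trans (Set.indicator_apply_eq_zero.2 fun _ => h0).symm
        · rw [Set.indicator_of_mem (Nat.mem_smoothNumbers_of_lt hpos (Finset.mem_range.1 hn))]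
    _ ≤ _ := (summable_subtype_iff_indicator.1 hsmooth.summable).sum_le_tsum _ fun n _ =>
        Set.indicator_nonneg (fun n _ => hh n) n

theorem hasSum_exp_tsum_of_multiplicative (hh : ∀ n, 0 ≤ h n) (h0 : h 0 = 0) (h1 : h 1 = 1)
    (hmul : ∀ {m n : ℕ}, m.Coprime n → h (m * n) = h m * h n) (hsum : Summable a)
    (ha : ∀ p, ¬ p.Prime → a p = 0)
    (hlocal : ∀ p, p.Prime → HasSum (fun e => h (p ^ e)) (exp (a p))) :
    HasSum h (exp (∑' p, a p)) := by
  have ha0 (p : ℕ) : 0 ≤ a p := by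
    by_cases hp : p.Prime
    · refine one_le_exp_iff.1 ?_
      simpa only [pow_zero, h1] using le_hasSum (hlocal p hp) 0 fun e _ => hh _
    · exact (ha p hp).ge
  have hprod := prod_primesBelow_tsum_eq_exp_sum ha hlocal
  have hsummable : Summable h := summable_of_sum_range_le hh fun N =>
    calc ∑ n ∈ Finset.range N, h n ≤ exp (∑ p ∈ Finset.range N, a p) := hprod N ▸
          sum_range_le_prod_primesBelow_tsum hh h0 h1 hmul (fun {p} hp => (hlocal p hp).summable) N
      _ ≤ exp (∑' p, a p) := exp_le_exp.2 (hsum.sum_le_tsum _ fun p _ => ha0 p)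
  have hlim := EulerProduct.eulerProduct h1 hmul hsummable.norm h0
  simp only [hprod] at hlim
  exact tendsto_nhds_unique hlim hsum.hasSum.tendsto_sum_nat.rexp ▸ hsummable.hasSum

theorem harmSum_mem_finset (s : Finset ℕ) (hs : ∀ p ∈ s, p.Prime) :
    harmSum (· ∈ s) = ∏ p ∈ s, (1 - (p : ℝ)⁻¹)⁻¹ := by
  let f : ℕ →* ℝ := invMonoidHom.comp (Nat.castRingHom ℝ).toMonoidHom
  have hf {p : ℕ} (hp : p.Prime) : ‖f p‖ < 1 := by
    change ‖(p : ℝ)⁻¹‖ < 1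
    rw [norm_of_nonneg (by positivity)]
    exact inv_lt_one_of_one_lt₀ (Nat.one_lt_cast.2 hp.one_lt)
  have hset : {n : ℕ | 0 < n ∧ ∀ p : ℕ, p.Prime → p ∣ n → p ∈ s} = Nat.factoredNumbers s := by
    ext n
    rw [Set.mem_ofPred_eq, Nat.mem_factoredNumbers_iff_forall_le]
    refine ⟨fun H => ⟨H.1.ne', fun p _ => H.2 p⟩, fun H => ⟨H.1.bot_lt, fun p hp hdvd => ?_⟩⟩
    exact H.2 p (Nat.le_of_dvd H.1.bot_lt hdvd) hp hdvd
  have hprod :=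
    (EulerProduct.summable_and_hasSum_factoredNumbers_prod_filter_prime_geometric hf s).2
  rw [Finset.filter_true_of_mem hs] at hprod
  calc harmSum (· ∈ s) = ∑' n : Nat.factoredNumbers s, 1 / ((n : ℕ) : ℝ) :=
        tsum_congr_set_coe (fun n : ℕ => 1 / (n : ℝ)) hset
    _ = ∑' n : Nat.factoredNumbers s, f n := by simp only [one_div]; rfl
    _ = ∏ p ∈ s, (1 - (p : ℝ)⁻¹)⁻¹ := hprod.tsum_eq

end EulerProduct

theorem abs_log_sub_le_max {g y η : ℝ} (hy : 0 ≤ y) (hyg : 1 + y ≤ g) (hgη : g ≤ 1 + y + η) :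
    |log g - y| ≤ max η (y ^ 2) := by
  have hlower : y - y ^ 2 ≤ log g :=
    calc y - y ^ 2 ≤ 1 - (1 + y)⁻¹ := by
          rw [← sub_nonneg]
          have : 1 - (1 + y)⁻¹ - (y - y ^ 2) = y ^ 3 * (1 + y)⁻¹ := by field_simp; ring
          rw [this]
          positivity
      _ ≤ log (1 + y) := one_sub_inv_le_log_of_pos (by linarith)
      _ ≤ log g := log_le_log (by linarith) hyg
  have hupper : log g ≤ g - 1 := log_le_sub_one_of_pos (by linarith)
  rw [abs_le]
  constructor <;> linarith [le_max_left η (y ^ 2), le_max_right η (y ^ 2)]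

/-- The summand of the denominator in the theorem, extended by zero to all natural numbers: a
multiplicative function supported on the `k`-free integers composed of primes of `A`. -/
noncomputable def phiWeight (k : ℕ) (A : Set ℕ) (n : ℕ) : ℝ :=
  if (∀ p : ℕ, p.Prime → p ∣ n → p ∈ A) ∧ KFree k n then
    (1 : ℝ) / ((freePart (k - 1) n * Nat.totient (powerPart (k - 1) n) : ℕ) : ℝ)
  else 0

section PhiWeight

theorem freePart_mul_powerPart (m : ℕ) {n : ℕ} (hn : n ≠ 0) :
    freePart m n * powerPart m n = n := by
  rw [freePart, powerPart, ← Finsupp.prod_mul]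
  simp only [← pow_add, Nat.mod_add_div]
  exact Nat.prod_factorization_pow_eq_self hn

theorem powerPart_dvd (m : ℕ) {n : ℕ} (hn : n ≠ 0) : powerPart m n ∣ n :=
  ⟨_, (freePart_mul_powerPart m hn).symm.trans (mul_comm _ _)⟩

variable {k m n p e : ℕ} {A : Set ℕ}

theorem freePart_mul (h : m.Coprime n) : freePart k (m * n) = freePart k m * freePart k n := by
  rw [freePart, Nat.factorization_mul_of_coprime h]
  exact Finsupp.prod_add_index_of_disjoint h.disjoint_primeFactors _

theorem powerPart_mul (h : m.Coprime n) :
    powerPart k (m * n) = powerPart k m * powerPart k n := by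
  rw [powerPart, Nat.factorization_mul_of_coprime h]
  exact Finsupp.prod_add_index_of_disjoint h.disjoint_primeFactors _

theorem freePart_prime_pow (hp : p.Prime) : freePart k (p ^ e) = p ^ (e % k) := by
  rw [freePart, hp.factorization_pow, Finsupp.prod_single_index (by simp)]

theorem powerPart_prime_pow (hp : p.Prime) : powerPart k (p ^ e) = p ^ (k * (e / k)) := by
  rw [powerPart, hp.factorization_pow, Finsupp.prod_single_index (by simp)]

theorem kFree_mul_iff (hk : k ≠ 0) (h : m.Coprime n) :
    KFree k (m * n) ↔ KFree k m ∧ KFree k n := by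
  simp only [KFree, ← forall₂_and, ← not_or]
  exact forall₂_congr fun p hp => not_congr (h.isPrimePow_dvd_mul (hp.isPrimePow.pow hk))

theorem kFree_prime_pow_iff (hp : p.Prime) : KFree k (p ^ e) ↔ e < k := by
  refine ⟨fun h => not_le.1 fun hle => h p hp (pow_dvd_pow p hle), fun he q hq hdvd => ?_⟩
  obtain rfl := (Nat.prime_dvd_prime_iff_eq hq hp).1
    (hq.dvd_of_dvd_pow ((dvd_pow_self q (by lia)).trans hdvd))
  exact he.not_ge ((Nat.pow_dvd_pow_iff_le_right hp.one_lt).1 hdvd)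

theorem forall_prime_dvd_mul_mem_iff :
    (∀ p : ℕ, p.Prime → p ∣ m * n → p ∈ A) ↔
      (∀ p : ℕ, p.Prime → p ∣ m → p ∈ A) ∧ ∀ p : ℕ, p.Prime → p ∣ n → p ∈ A := by
  rw [← forall₂_and]
  exact forall₂_congr fun p hp => by rw [hp.dvd_mul, or_imp]

theorem phiWeight_nonneg (k : ℕ) (A : Set ℕ) (n : ℕ) : 0 ≤ phiWeight k A n := by
  unfold phiWeight
  split_ifs <;> positivity

theorem phiWeight_zero (k : ℕ) (A : Set ℕ) : phiWeight k A 0 = 0 :=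
  if_neg fun h => h.2 2 Nat.prime_two (dvd_zero _)

theorem phiWeight_one (hk : k ≠ 0) (A : Set ℕ) : phiWeight k A 1 = 1 := by
  have hfree : KFree k 1 := by
    simpa only [pow_zero] using (kFree_prime_pow_iff Nat.prime_two).2 (Nat.pos_of_ne_zero hk)
  rw [phiWeight, if_pos ⟨fun p hp h => absurd (Nat.dvd_one.1 h) hp.ne_one, hfree⟩]
  simp [freePart, powerPart]

theorem phiWeight_mul (hk : k ≠ 0) (A : Set ℕ) (h : m.Coprime n) :
    phiWeight k A (m * n) = phiWeight k A m * phiWeight k A n := by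
  rcases eq_or_ne m 0 with rfl | hm
  · rw [zero_mul, phiWeight_zero, zero_mul]
  rcases eq_or_ne n 0 with rfl | hn
  · rw [mul_zero, phiWeight_zero, mul_zero]
  have hcoprime : (powerPart (k - 1) m).Coprime (powerPart (k - 1) n) :=
    (h.coprime_dvd_left (powerPart_dvd _ hm)).coprime_dvd_right (powerPart_dvd _ hn)
  simp only [phiWeight, forall_prime_dvd_mul_mem_iff, kFree_mul_iff hk h, and_and_and_comm,
    freePart_mul h, powerPart_mul h, Nat.totient_mul hcoprime, ite_zero_mul_ite_zero,
    one_div_mul_one_div, ← Nat.cast_mul, mul_mul_mul_comm]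

theorem phiWeight_prime_pow_of_notMem (hp : p.Prime) (hpA : p ∉ A) (he : e ≠ 0) :
    phiWeight k A (p ^ e) = 0 :=
  if_neg fun h => hpA (h.1 p hp (dvd_pow_self p he))

theorem phiWeight_prime_pow_of_le (hp : p.Prime) (he : k ≤ e) : phiWeight k A (p ^ e) = 0 :=
  if_neg fun h => he.not_gt ((kFree_prime_pow_iff hp).1 h.2)

theorem phiWeight_prime_pow (hp : p.Prime) (hpA : p ∈ A) (he : e < k) :
    phiWeight k A (p ^ e) =
      1 / ((p ^ (e % (k - 1)) * Nat.totient (p ^ ((k - 1) * (e / (k - 1)))) : ℕ) : ℝ) := by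
  rw [phiWeight, if_pos, freePart_prime_pow hp, powerPart_prime_pow hp]
  refine ⟨fun q hq hdvd => ?_, (kFree_prime_pow_iff hp).2 he⟩
  rwa [(Nat.prime_dvd_prime_iff_eq hq hp).1 (hq.dvd_of_dvd_pow hdvd)]

theorem phiWeight_prime_pow_of_lt (hp : p.Prime) (hpA : p ∈ A) (he : e < k - 1) :
    phiWeight k A (p ^ e) = (p : ℝ)⁻¹ ^ e := by
  rw [phiWeight_prime_pow hp hpA (by lia), Nat.mod_eq_of_lt he, Nat.div_eq_of_lt he]
  simp

theorem phiWeight_prime_pow_self (hk : 2 ≤ k) (hp : p.Prime) (hpA : p ∈ A) :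
    phiWeight k A (p ^ (k - 1)) = (p : ℝ)⁻¹ ^ (k - 1) * (1 - (p : ℝ)⁻¹)⁻¹ := by
  obtain ⟨j, rfl⟩ := Nat.exists_eq_add_of_le' hk
  have hp0 : (p : ℝ) ≠ 0 := Nat.cast_ne_zero.2 hp.ne_zero
  have htotient : (p : ℝ) ^ j * (p - 1) = p ^ (j + 1) * (1 - (p : ℝ)⁻¹) := by
    field_simp
    ring
  rw [phiWeight_prime_pow hp hpA (by lia), show j + 2 - 1 = j + 1 from rfl, Nat.mod_self,
    Nat.div_self j.succ_pos, mul_one, pow_zero, one_mul, Nat.totient_prime_pow_succ hp,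
    Nat.cast_mul, Nat.cast_pow, Nat.cast_sub hp.one_le, Nat.cast_one, htotient, one_div, mul_inv,
    inv_pow]

-- The last term `p ^ (-(k - 1)) * (1 - p⁻¹)⁻¹` is the whole tail of the geometric series.
theorem sum_phiWeight_prime_pow (hk : 2 ≤ k) (hp : p.Prime) (hpA : p ∈ A) :
    ∑ e ∈ Finset.range k, phiWeight k A (p ^ e) = (1 - (p : ℝ)⁻¹)⁻¹ := by
  have hinv : (p : ℝ)⁻¹ < 1 := inv_lt_one_of_one_lt₀ (Nat.one_lt_cast.2 hp.one_lt)
  have hlast := Finset.sum_range_succ (fun e => phiWeight k A (p ^ e)) (k - 1)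
  rw [Nat.sub_add_cancel (by lia), phiWeight_prime_pow_self hk hp hpA, Finset.sum_congr rfl
    fun e he => phiWeight_prime_pow_of_lt hp hpA (Finset.mem_range.1 he)] at hlast
  rw [hlast, geom_sum_eq hinv.ne]
  have : 1 - (p : ℝ)⁻¹ ≠ 0 := by linarith
  have : (p : ℝ)⁻¹ - 1 ≠ 0 := by linarith
  generalize (p : ℝ)⁻¹ = x at *
  field_simp
  ring

theorem inv_le_phiWeight_prime (hk : 2 ≤ k) (hp : p.Prime) (hpA : p ∈ A) :
    (p : ℝ)⁻¹ ≤ phiWeight k A p := by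
  have hp1 : (1 : ℝ) < p := Nat.one_lt_cast.2 hp.one_lt
  have hinv : 0 < (p : ℝ)⁻¹ := inv_pos.2 (zero_lt_one.trans hp1)
  have hinv1 : (p : ℝ)⁻¹ < 1 := inv_lt_one_of_one_lt₀ hp1
  nth_rw 2 [← pow_one p]
  rcases hk.eq_or_lt with rfl | hk
  · rw [phiWeight_prime_pow_self le_rfl hp hpA, pow_one]
    exact le_mul_of_one_le_right hinv.le ((one_le_inv₀ (by linarith)).2 (by linarith))
  · rw [phiWeight_prime_pow_of_lt hp hpA (by lia), pow_one]

end PhiWeight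

/-- The factor at `p` of the Euler product of the Dirichlet series `∑ phiWeight k A n * n ^ (-s)`.
The sum stops at `e = k - 1` because `phiWeight k A` is supported on `k`-free numbers. -/
noncomputable def phiFactor (k : ℕ) (A : Set ℕ) (s : ℝ) (p : ℕ) : ℝ :=
  ∑ e ∈ Finset.range k, phiWeight k A (p ^ e) * ((p : ℝ) ^ (-s)) ^ e

/-- The discrepancy between the logarithm of the Euler factor `phiFactor k A s p` and its leading
term `p ^ (-1 - s)`, set to zero for `p ∉ A`. -/
noncomputable def eulerError (k : ℕ) (A : Set ℕ) (s : ℝ) : ℕ → ℝ :=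
  A.indicator fun p => log (phiFactor k A s p) - (p : ℝ)⁻¹ * (p : ℝ) ^ (-s)

section EulerError

variable {k p : ℕ} {A : Set ℕ} {s : ℝ}

theorem hasSum_phiFactor (k : ℕ) (A : Set ℕ) (s : ℝ) (hp : p.Prime) :
    HasSum (fun e => phiWeight k A (p ^ e) * ((p ^ e : ℕ) : ℝ) ^ (-s)) (phiFactor k A s p) := by
  have hpow (e : ℕ) : ((p ^ e : ℕ) : ℝ) ^ (-s) = ((p : ℝ) ^ (-s)) ^ e := by
    rw [Nat.cast_pow, rpow_pow_comm (Nat.cast_nonneg p)]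
  simp only [hpow]
  refine hasSum_sum_of_ne_finset_zero fun e he => ?_
  rw [phiWeight_prime_pow_of_le hp (by simpa only [Finset.mem_range, not_lt] using he), zero_mul]

theorem phiFactor_of_notMem (hk : k ≠ 0) (hp : p.Prime) (hpA : p ∉ A) (s : ℝ) :
    phiFactor k A s p = 1 := by
  rw [phiFactor, Finset.sum_eq_single_of_mem 0 (Finset.mem_range.2 (Nat.pos_of_ne_zero hk))
    fun e _ he => by rw [phiWeight_prime_pow_of_notMem hp hpA he, zero_mul]]
  rw [pow_zero, pow_zero, phiWeight_one hk, mul_one]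

theorem phiFactor_zero (hk : 2 ≤ k) (hp : p.Prime) (hpA : p ∈ A) :
    phiFactor k A 0 p = (1 - (p : ℝ)⁻¹)⁻¹ := by
  simp only [phiFactor, neg_zero, rpow_zero, one_pow, mul_one, sum_phiWeight_prime_pow hk hp hpA]

theorem one_add_le_phiFactor (hk : 2 ≤ k) (hp : p.Prime) (hpA : p ∈ A) (s : ℝ) :
    1 + (p : ℝ)⁻¹ * (p : ℝ) ^ (-s) ≤ phiFactor k A s p :=
  calc 1 + (p : ℝ)⁻¹ * (p : ℝ) ^ (-s)
      ≤ ∑ e ∈ Finset.range 2, phiWeight k A (p ^ e) * ((p : ℝ) ^ (-s)) ^ e := by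
        rw [Finset.sum_range_succ, Finset.sum_range_one, pow_zero, pow_zero, pow_one, pow_one,
          phiWeight_one (by lia), mul_one]
        gcongr
        exact inv_le_phiWeight_prime hk hp hpA
    _ ≤ phiFactor k A s p :=
        Finset.sum_le_sum_of_subset_of_nonneg (Finset.range_mono hk) fun e _ _ =>
          mul_nonneg (phiWeight_nonneg k A _) (by positivity)

theorem phiFactor_pos (hk : 2 ≤ k) (hp : p.Prime) (hpA : p ∈ A) (s : ℝ) :
    0 < phiFactor k A s p :=
  lt_of_lt_of_le (by positivity) (one_add_le_phiFactor hk hp hpA s)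

theorem phiFactor_sub_one_le (hk : 2 ≤ k) (hs : 0 ≤ s) (hp : p.Prime) (hpA : p ∈ A) :
    phiFactor k A s p - 1 ≤ ((1 - (p : ℝ)⁻¹)⁻¹ - 1) * (p : ℝ) ^ (-s) := by
  have hz1 : (p : ℝ) ^ (-s) ≤ 1 :=
    rpow_le_one_of_one_le_of_nonpos (Nat.one_le_cast.2 hp.one_le) (neg_nonpos.2 hs)
  have hterm (e : ℕ) : phiWeight k A (p ^ (e + 1)) * ((p : ℝ) ^ (-s)) ^ (e + 1) ≤
      phiWeight k A (p ^ (e + 1)) * (p : ℝ) ^ (-s) :=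
    mul_le_mul_of_nonneg_left (pow_le_of_le_one (by positivity) hz1 e.succ_ne_zero)
      (phiWeight_nonneg k A _)
  obtain ⟨j, hj⟩ := Nat.exists_eq_succ_of_ne_zero (show k ≠ 0 by lia)
  have hsplit (w : ℕ → ℝ) : ∑ e ∈ Finset.range k, w e = ∑ e ∈ Finset.range j, w (e + 1) + w 0 := by
    rw [hj, Finset.sum_range_succ']
  rw [← sum_phiWeight_prime_pow hk hp hpA, phiFactor, hsplit, hsplit, pow_zero, pow_zero,
    phiWeight_one (by lia), mul_one, add_sub_cancel_right, add_sub_cancel_right, Finset.sum_mul]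
  exact Finset.sum_le_sum fun e _ => hterm e

theorem phiFactor_le (hk : 2 ≤ k) (hs : 0 ≤ s) (hp : p.Prime) (hpA : p ∈ A) :
    phiFactor k A s p ≤ 1 + (p : ℝ)⁻¹ * (p : ℝ) ^ (-s) + 2 / (p : ℝ) ^ 2 := by
  have hp2 : (2 : ℝ) ≤ p := Nat.ofNat_le_cast.2 hp.two_le
  have hz1 : (p : ℝ) ^ (-s) ≤ 1 :=
    rpow_le_one_of_one_le_of_nonpos (by linarith) (neg_nonpos.2 hs)
  have hsub : 0 < (p : ℝ) - 1 := by linarith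
  have hgeom : (1 - (p : ℝ)⁻¹)⁻¹ - 1 = (p : ℝ)⁻¹ + 1 / (p * (p - 1)) := by
    field_simp
    ring
  have htail : 1 / (p * (p - 1)) * (p : ℝ) ^ (-s) ≤ 2 / (p : ℝ) ^ 2 :=
    calc 1 / (p * (p - 1)) * (p : ℝ) ^ (-s) ≤ 1 / (p * (p - 1)) :=
          mul_le_of_le_one_right (by positivity) hz1
      _ ≤ 2 / (p : ℝ) ^ 2 := by
          rw [div_le_div_iff₀ (by positivity) (by positivity)]
          nlinarith
  have hle := phiFactor_sub_one_le hk hs hp hpA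
  rw [hgeom, add_mul] at hle
  linarith

theorem norm_eulerError_le (hk : 2 ≤ k) (hA : ∀ p ∈ A, p.Prime) (hs : 0 ≤ s) (p : ℕ) :
    ‖eulerError k A s p‖ ≤ 2 / (p : ℝ) ^ 2 := by
  by_cases hpA : p ∈ A
  · have hp := hA p hpA
    have hz : (p : ℝ) ^ (-s) ≤ 1 :=
      rpow_le_one_of_one_le_of_nonpos (Nat.one_le_cast.2 hp.one_le) (neg_nonpos.2 hs)
    have hsq : ((p : ℝ)⁻¹ * (p : ℝ) ^ (-s)) ^ 2 ≤ 2 / (p : ℝ) ^ 2 :=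
      calc ((p : ℝ)⁻¹ * (p : ℝ) ^ (-s)) ^ 2 ≤ (p : ℝ)⁻¹ ^ 2 := by
            gcongr
            exact mul_le_of_le_one_right (by positivity) hz
        _ ≤ 2 / (p : ℝ) ^ 2 := by
            rw [inv_pow, ← one_div]
            gcongr
            exact one_le_two
    rw [eulerError, Set.indicator_of_mem hpA, norm_eq_abs]
    exact (abs_log_sub_le_max (by positivity) (one_add_le_phiFactor hk hp hpA s)
      (phiFactor_le hk hs hp hpA)).trans (max_le le_rfl hsq)
  · rw [eulerError, Set.indicator_of_notMem hpA, norm_zero]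
    positivity

theorem summable_two_div_sq : Summable fun p : ℕ => 2 / (p : ℝ) ^ 2 := by
  simpa only [div_eq_mul_inv] using (summable_nat_pow_inv.2 one_lt_two).mul_left (2 : ℝ)

theorem summable_eulerError (hk : 2 ≤ k) (hA : ∀ p ∈ A, p.Prime) (hs : 0 ≤ s) :
    Summable (eulerError k A s) :=
  .of_norm_bounded summable_two_div_sq (norm_eulerError_le hk hA hs)

theorem continuous_eulerError (hk : 2 ≤ k) (hA : ∀ p ∈ A, p.Prime) (p : ℕ) :
    Continuous fun s => eulerError k A s p := by
  by_cases hpA : p ∈ A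
  · have hp := hA p hpA
    have hpow : Continuous fun s : ℝ => (p : ℝ) ^ (-s) :=
      continuous_const.rpow continuous_neg fun _ => Or.inl (Nat.cast_ne_zero.2 hp.ne_zero)
    have hfactor : Continuous fun s => phiFactor k A s p :=
      continuous_finsetSum _ fun e _ => continuous_const.mul (hpow.pow e)
    simp only [eulerError, Set.indicator_of_mem hpA]
    exact (hfactor.log fun s => (phiFactor_pos hk hp hpA s).ne').sub (continuous_const.mul hpow)
  · simp only [eulerError, Set.indicator_of_notMem hpA]
    exact continuous_const

theorem tendsto_tsum_eulerError (hk : 2 ≤ k) (hA : ∀ p ∈ A, p.Prime) :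
    Tendsto (fun t : ℝ => ∑' p, eulerError k A t⁻¹ p) atTop (𝓝 (∑' p, eulerError k A 0 p)) := by
  refine tendsto_tsum_of_dominated_convergence summable_two_div_sq (fun p => ?_) ?_
  · exact ((continuous_eulerError hk hA p).tendsto 0).comp tendsto_inv_atTop_zero
  · filter_upwards [eventually_ge_atTop 0] with t ht
    exact norm_eulerError_le hk hA (inv_nonneg.2 ht)

theorem summable_indicator_inv_mul_rpow (A : Set ℕ) (hs : 0 < s) :
    Summable fun n : ℕ => A.indicator (fun p : ℕ => (p : ℝ)⁻¹) n * (n : ℝ) ^ (-s) := by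
  have hsummable := (summable_nat_rpow.2 (show -1 - s < -1 by linarith)).indicator A
  refine hsummable.congr fun n => ?_
  rw [← Set.indicator_mul_left A _ fun m : ℕ => (m : ℝ) ^ (-s)]
  refine congrFun (congrArg A.indicator (funext fun m => ?_)) n
  rw [sub_eq_add_neg, rpow_add' m.cast_nonneg (by linarith), rpow_neg_one]

theorem hasSum_phiWeight_mul_rpow (hk : 2 ≤ k) (hA : ∀ p ∈ A, p.Prime) (hs : 0 < s) :
    HasSum (fun n : ℕ => phiWeight k A n * (n : ℝ) ^ (-s))
      (exp (∑' n : ℕ, A.indicator (fun p : ℕ => (p : ℝ)⁻¹) n * (n : ℝ) ^ (-s) +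
        ∑' p, eulerError k A s p)) := by
  have hmain := summable_indicator_inv_mul_rpow A hs
  have herror := summable_eulerError hk hA hs.le
  have hlog (p : ℕ) : A.indicator (fun p : ℕ => (p : ℝ)⁻¹) p * (p : ℝ) ^ (-s) +
      eulerError k A s p = A.indicator (fun p => log (phiFactor k A s p)) p := by
    by_cases hpA : p ∈ A
    · simp only [eulerError, Set.indicator_of_mem hpA, add_sub_cancel]
    · simp only [eulerError, Set.indicator_of_notMem hpA, zero_mul, add_zero]
  rw [← hmain.tsum_add herror]
  refine hasSum_exp_tsum_of_multiplicative
    (fun n => mul_nonneg (phiWeight_nonneg k A n) (by positivity)) ?_ ?_ (fun {m n} h => ?_)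
    (hmain.add herror) (fun p hp => ?_) fun p hp => ?_
  · rw [phiWeight_zero, zero_mul]
  · rw [phiWeight_one (by lia), Nat.cast_one, one_rpow, mul_one]
  · rw [phiWeight_mul (by lia) A h, Nat.cast_mul, mul_rpow m.cast_nonneg n.cast_nonneg,
      mul_mul_mul_comm]
  · rw [hlog, Set.indicator_of_notMem fun hpA => hp (hA p hpA)]
  · rw [hlog]
    convert hasSum_phiFactor k A s hp using 1
    by_cases hpA : p ∈ A
    · rw [Set.indicator_of_mem hpA, exp_log (phiFactor_pos hk hp hpA s)]
    · rw [Set.indicator_of_notMem hpA, exp_zero, phiFactor_of_notMem (by lia) hp hpA]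

end EulerError

theorem harmSum_eq_exp {k : ℕ} (hk : 2 ≤ k) {A : Set ℕ} (hA : ∀ p ∈ A, p.Prime) (N : ℕ) :
    harmSum (fun p => p ≤ N ∧ p ∈ A) =
      exp (∑ p ∈ Finset.Ioc 0 N, A.indicator (fun p : ℕ => (p : ℝ)⁻¹) p +
        ∑ p ∈ Finset.Ioc 0 N, eulerError k A 0 p) := by
  have hmem : (fun p => p ≤ N ∧ p ∈ A) = (· ∈ {p ∈ Finset.Ioc 0 N | p ∈ A}) := by
    ext p
    rw [Finset.mem_filter, Finset.mem_Ioc, and_assoc]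
    exact (and_iff_right_of_imp fun h => (hA p h.2).pos).symm
  rw [hmem, harmSum_mem_finset _ fun p hp => hA p (Finset.mem_filter.1 hp).2, Finset.prod_filter,
    ← Finset.sum_add_distrib, exp_sum]
  refine Finset.prod_congr rfl fun p _ => ?_
  by_cases hpA : p ∈ A
  · have hp := hA p hpA
    rw [if_pos hpA, eulerError, Set.indicator_of_mem hpA, Set.indicator_of_mem hpA, neg_zero,
      rpow_zero, mul_one, add_sub_cancel, exp_log (phiFactor_pos hk hp hpA 0),
      phiFactor_zero hk hp hpA]
  · rw [if_neg hpA, eulerError, Set.indicator_of_notMem hpA, Set.indicator_of_notMem hpA,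
      add_zero, exp_zero]

theorem tendsto_sum_Ioc_of_summable {a : ℕ → ℝ} (ha : Summable a) (h0 : a 0 = 0) :
    Tendsto (fun N : ℕ => ∑ n ∈ Finset.Ioc 0 N, a n) atTop (𝓝 (∑' n, a n)) := by
  refine ((tendsto_add_atTop_iff_nat 1).2 ha.hasSum.tendsto_sum_nat).congr fun N => ?_
  rw [Finset.range_eq_Ico, Finset.sum_eq_sum_Ico_succ_bot N.succ_pos, h0, zero_add]
  rfl

theorem harmSum_div_sum_phiWeight {k : ℕ} (hk : 2 ≤ k) {A : Set ℕ} (hA : ∀ p ∈ A, p.Prime) {N : ℕ}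
    (hN : N ≠ 0) :
    harmSum (fun p => p ≤ N ∧ p ∈ A) / ∑ n ∈ Finset.Icc 1 N, phiWeight k A n =
      exp (∑ p ∈ Finset.Ioc 0 N, eulerError k A 0 p) / (expSum (phiWeight k A) (log N) /
        exp (expSum (A.indicator fun p : ℕ => (p : ℝ)⁻¹) (log N))) := by
  rw [harmSum_eq_exp hk hA, expSum_log hN, expSum_log hN, div_div_eq_mul_div, ← exp_add, add_comm]
  rfl

theorem tendsto_expSum_phiWeight_div_exp {k : ℕ} (hk : 2 ≤ k) {A : Set ℕ}
    (hA : ∀ p ∈ A, p.Prime) {θ : ℝ}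
    (hdens : Tendsto (fun N : ℕ => ((A ∩ Set.Icc 1 N).ncard : ℝ) /
      (({p : ℕ | p.Prime} ∩ Set.Icc 1 N).ncard : ℝ)) atTop (𝓝 θ)) :
    Tendsto (fun t => expSum (phiWeight k A) t /
        exp (expSum (A.indicator fun p : ℕ => (p : ℝ)⁻¹) t)) atTop
      (𝓝 ((Gamma (θ + 1))⁻¹ *
        exp (∑' p, eulerError k A 0 p - eulerMascheroniConstant * θ))) := by
  have h0 : 0 ∉ A := fun h => Nat.not_prime_zero (hA 0 h)
  have hlog (n : ℕ) : A.indicator (fun p : ℕ => (p : ℝ)⁻¹) n * log n =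
      A.indicator (fun p => log p / p) n := by
    rw [← Set.indicator_mul_left A _ fun m : ℕ => log m]
    simp only [div_eq_inv_mul]
  refine tendsto_expSum_div_exp_expSum (phiWeight_nonneg k A) (phiWeight_zero k A)
    (fun n => Set.indicator_nonneg (fun n _ => by positivity) n) (Set.indicator_of_notMem h0 _)
    (fun t ht => summable_indicator_inv_mul_rpow A (inv_pos.2 ht)) ?_
    (tendsto_tsum_eulerError hk hA) fun t ht => hasSum_phiWeight_mul_rpow hk hA (inv_pos.2 ht)
  simp only [hlog]
  exact tendsto_expSum_div (tendsto_sum_indicator_log_div_div_log hdens)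

theorem generalized_phi_mertens_general
    (k : ℕ) (hk : 2 ≤ k)
    (A : Set ℕ) (hA : ∀ p ∈ A, Nat.Prime p)
    (θ : ℝ)
    (hdens : Tendsto
      (fun N : ℕ => ((A ∩ Set.Icc 1 N).ncard : ℝ) /
        (({p : ℕ | Nat.Prime p} ∩ Set.Icc 1 N).ncard : ℝ))
      atTop (𝓝 θ)) :
    Tendsto
      (fun N : ℕ =>
        harmSum (fun p => p ≤ N ∧ p ∈ A) /
        ∑ n ∈ Finset.Icc 1 N,
          if (∀ p : ℕ, p.Prime → p ∣ n → p ∈ A) ∧ KFree k n then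
            (1 : ℝ) / ((freePart (k - 1) n * Nat.totient (powerPart (k - 1) n) : ℕ) : ℝ)
          else 0)
      atTop
      (𝓝 (exp (eulerMascheroniConstant * θ) * Gamma (θ + 1))) := by
  have hθ : 0 ≤ θ := ge_of_tendsto' hdens fun N => by positivity
  have hGamma : Gamma (θ + 1) ≠ 0 := (Gamma_pos_of_pos (by linarith)).ne'
  have hE0 : eulerError k A 0 0 = 0 :=
    Set.indicator_of_notMem (fun h => Nat.not_prime_zero (hA 0 h)) _
  have herror : Tendsto (fun N : ℕ => exp (∑ p ∈ Finset.Ioc 0 N, eulerError k A 0 p)) atTop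
      (𝓝 (exp (∑' p, eulerError k A 0 p))) :=
    (tendsto_sum_Ioc_of_summable (summable_eulerError hk hA le_rfl) hE0).rexp
  have hsum := (tendsto_expSum_phiWeight_div_exp hk hA hdens).comp
    (tendsto_log_atTop.comp tendsto_natCast_atTop_atTop)
  convert (herror.div hsum (by positivity)).congr' ?_ using 2
  · rw [exp_sub]
    field_simp
  · filter_upwards [eventually_ne_atTop 0] with N hN
    exact (harmSum_div_sum_phiWeight hk hA hN).symm

/-- **Theorem 3.** For `k ≥ 2` and a set `A` of primes with natural density `θ ∈ (0,1]` within
the primes, the ratio of the harmonic sum over integers whose prime factors are `≤ N` and lie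
in `A` to the sum over `k`-free `n ≤ N` with prime factors in `A` of
`1 / (n_{(k-1)-free} · φ(n_{(k-1)-power}))` tends to `e^{γθ} Γ(θ+1)`. -/
theorem generalized_phi_mertens
    (k : ℕ) (hk : 2 ≤ k)
    (A : Set ℕ) (hA : ∀ p ∈ A, Nat.Prime p)
    (θ : ℝ) (hθ : θ ∈ Set.Ioc (0 : ℝ) 1)
    (hdens : Tendsto
      (fun N : ℕ => ((A ∩ Set.Icc 1 N).ncard : ℝ) / (({p : ℕ | Nat.Prime p} ∩ Set.Icc 1 N).ncard : ℝ))
      atTop (nhds θ)) :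
    Tendsto
      (fun N : ℕ =>
        harmSum (fun p => p ≤ N ∧ p ∈ A) /
        ∑ n ∈ Finset.Icc 1 N,
          if (∀ p : ℕ, p.Prime → p ∣ n → p ∈ A) ∧ KFree k n then
            (1 : ℝ) / ((freePart (k - 1) n * Nat.totient (powerPart (k - 1) n) : ℕ) : ℝ)
          else 0)
      atTop
      (nhds (Real.exp (Real.eulerMascheroniConstant * θ) * Real.Gamma (θ + 1))) :=
  generalized_phi_mertens_general k hk A hA θ hdens
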